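/- arXiv:1904.00808 — 2 statements merged into one kernel-verified Lean document; each statement's English description precedes it below -/
import Mathlib

section
/- Let (X,d,μ) be a metric measure space with finite Hausdorff dimension. Suppose there exists C ≥ 1 such that for every Lipschitz function f : X → ℝ and every upper gradient ρ of f, one has Lip(f,x) ≤ C·ρ(x) for μ-almost every x ∈ X. Then (X,d,μ) is a Lipschitz differentiability space; moreover, the charts can be chosen so that every chart dimension n_i satisfies n_i ≤ dim_H X. -/
open MeasureTheory Metric Set Filter Topology ENNReal NNReal
open scoped RealInnerProductSpace

noncomputable section

namespace BKO

/-- `ℝⁿ` with the Euclidean metric. -/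
abbrev E (n : ℕ) : Type := EuclideanSpace ℝ (Fin n)

variable {X : Type*} [MetricSpace X]

/-- A set `G ⊆ ℝ × X` is the graph of a curve fragment if all first coordinates lie
in `[0,1]` and it is the graph of a `2`-biLipschitz function defined on a subset of `[0,1]`. -/
def IsFragmentGraph (X : Type*) [MetricSpace X] (G : Set (ℝ × X)) : Prop :=
  (∀ p ∈ G, p.1 ∈ Set.Icc (0:ℝ) 1) ∧
  ∀ p ∈ G, ∀ q ∈ G, |p.1 - q.1| ≤ 2 * dist p.2 q.2 ∧ dist p.2 q.2 ≤ 2 * |p.1 - q.1|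

/-- The space `Γ(X)` of curve fragments, identified with their graphs (nonempty compact
subsets of `[0,1] × X`), with the Hausdorff metric `d_Γ(γ₁,γ₂) = d_H(gr γ₁, gr γ₂)`. -/
def Fragment (X : Type*) [MetricSpace X] : Type _ :=
  {G : TopologicalSpace.NonemptyCompacts (ℝ × X) // IsFragmentGraph X (G : Set (ℝ × X))}

instance : MetricSpace (Fragment X) :=
  inferInstanceAs (MetricSpace {G : TopologicalSpace.NonemptyCompacts (ℝ × X) // _})

instance : MeasurableSpace (Fragment X) := borel _
instance : BorelSpace (Fragment X) := ⟨rfl⟩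

namespace Fragment

/-- The graph of a curve fragment. -/
def graph (γ : Fragment X) : Set (ℝ × X) := (γ.1 : Set (ℝ × X))

/-- The (compact) domain of a curve fragment. -/
def dom (γ : Fragment X) : Set ℝ := Prod.fst '' γ.graph

/-- The image of a curve fragment. -/
def im (γ : Fragment X) : Set X := Prod.snd '' γ.graph

/-- The function `dom γ → X` determined by the graph (junk value off the domain). -/
def fn (γ : Fragment X) (t : ℝ) : X :=
  @dite X (∃ x, (t, x) ∈ γ.graph) (Classical.dec _)
    (fun h => h.choose) (fun _ => γ.1.nonempty.choose.2)

/-- `γ_* 𝓛¹`: the pushforward under `γ` of Lebesgue measure restricted to `dom γ`. -/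
def measure [MeasurableSpace X] (γ : Fragment X) : Measure X :=
  (volume.restrict γ.dom).map γ.fn

end Fragment

/-- The measure `ν(ℙ)`, `ν(ℙ)(B) = ∫ γ_*𝓛¹(B) dℙ(γ)`. -/
def nu [MeasurableSpace X] (ℙ : Measure (Fragment X)) : Measure X :=
  ℙ.bind Fragment.measure

/-- The cone `C(w,θ) = {v : |⟨v,w⟩| ≥ θ‖v‖}`. -/
def cone {n : ℕ} (w : E n) (θ : ℝ) : Set (E n) := {v | θ * ‖v‖ ≤ |⟪v, w⟫|}

/-- A cone in `ℝⁿ` is a set of the form `C(w,θ)` with `w ∈ Sⁿ⁻¹`, `θ ∈ (0,1)`. -/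
def IsCone {n : ℕ} (C : Set (E n)) : Prop :=
  ∃ (w : E n) (θ : ℝ), ‖w‖ = 1 ∧ θ ∈ Set.Ioo (0:ℝ) 1 ∧ C = cone w θ

/-- `γ` is a `C`-curve with respect to `φ`. -/
def IsConeCurve {n : ℕ} (φ : X → E n) (C : Set (E n)) (γ : Fragment X) : Prop :=
  ∃ δ > (0:ℝ), ∀ p ∈ γ.graph, ∀ q ∈ γ.graph,
    φ p.2 - φ q.2 ∈ C \ Metric.ball 0 (δ * |p.1 - q.1|)

/-- `ℙ` is a `C`-Alberti representation of `μ` with respect to `φ`. -/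
def IsConeAlbertiRep [MeasurableSpace X] {n : ℕ} (μ : Measure X) (φ : X → E n)
    (C : Set (E n)) (ℙ : Measure (Fragment X)) : Prop :=
  IsProbabilityMeasure ℙ ∧ μ ≪ nu ℙ ∧ ∀ᵐ γ ∂ℙ, IsConeCurve φ C γ

/-- `S` is `C`-null with respect to `φ`: every `C`-curve meets `S` in `𝓗¹`-measure zero. -/
def ConeNull [MeasurableSpace X] [BorelSpace X] {n : ℕ} (φ : X → E n) (C : Set (E n))
    (S : Set X) : Prop :=
  ∀ γ : Fragment X, IsConeCurve φ C γ → μH[1] (γ.im ∩ S) = 0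

/-- Cones `C₁,…,C_m` are independent. -/
def IndepCones {n m : ℕ} (C : Fin m → Set (E n)) : Prop :=
  ∀ v : Fin m → E n, (∀ i, v i ∈ C i ∧ v i ≠ 0) → LinearIndependent ℝ v

/-- `μ` has `n` independent Alberti representations. -/
def HasIndepAlberti [MeasurableSpace X] (μ : Measure X) (n : ℕ) : Prop :=
  ∃ φ : X → E n, (∃ K, LipschitzWith K φ) ∧ ∃ C : Fin n → Set (E n),
    (∀ i, IsCone (C i)) ∧ IndepCones C ∧ ∀ i, ∃ ℙ, IsConeAlbertiRep μ φ (C i) ℙ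

/-- The collection `𝒮(φ)` of singular sets. -/
def MemScal [MeasurableSpace X] [BorelSpace X] {n : ℕ} (φ : X → E n) (S : Set X) : Prop :=
  MeasurableSet S ∧ ∀ θ ∈ Set.Ioo (0:ℝ) 1, ∃ (m : ℕ) (S' : Fin m → Set X) (w : Fin m → E n),
    S = (⋃ i, S' i) ∧ ∀ i, MeasurableSet (S' i) ∧ ‖w i‖ = 1 ∧ ConeNull φ (cone (w i) θ) (S' i)

/-- `Lip(f,x) = limsup_{r→0⁺} sup_{d(x,y)≤r} |f(y)-f(x)|/r`. -/
def lipAt (f : X → ℝ) (x : X) : ℝ :=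
  Filter.limsup (fun r : ℝ => sSup ((fun y => |f y - f x| / r) '' Metric.closedBall x r))
    (𝓝[>] (0:ℝ))

/-- `ind φ = {x : Lip(D⬝φ, x) > 0 for all D ∈ Sⁿ⁻¹}`. -/
def indSet {n : ℕ} (φ : X → E n) : Set X :=
  {x | ∀ D : E n, ‖D‖ = 1 → 0 < lipAt (fun y => ⟪φ y, D⟫) x}

/-- `f` is differentiable with respect to `φ` at `x₀`, with a unique derivative. -/
def DiffWrtAt {n : ℕ} (φ : X → E n) (f : X → ℝ) (x₀ : X) : Prop :=
  ∃! L : E n →ₗ[ℝ] ℝ,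
    Filter.Tendsto (fun x => |f x - f x₀ - L (φ x - φ x₀)| / dist x x₀) (𝓝[≠] x₀) (𝓝 0)

/-- `(X,d,μ)` is a Lipschitz differentiability space, with all chart dimensions
satisfying the predicate `P`. -/
def IsLipDiffSpaceWith [MeasurableSpace X] (μ : Measure X) (P : ℕ → Prop) : Prop :=
  ∃ (N : ℕ → ℕ) (U : ℕ → Set X) (φ : (i : ℕ) → X → E (N i)),
    (∀ i, P (N i)) ∧ (∀ i, MeasurableSet (U i)) ∧ (⋃ i, U i) = Set.univ ∧
    (∀ i, ∃ K, LipschitzWith K (φ i)) ∧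
    ∀ f : X → ℝ, (∃ K, LipschitzWith K f) →
      ∀ i, ∀ᵐ x ∂μ, x ∈ U i → DiffWrtAt (φ i) f x

/-- `ρ` is an upper gradient of `f`. -/
def IsUpperGradient (f ρ : X → ℝ) : Prop :=
  ∀ γ : ℝ → X, LipschitzOnWith 1 γ (Set.Icc 0 1) →
    |f (γ 1) - f (γ 0)| ≤ ∫ t in Set.Icc (0:ℝ) 1, ρ (γ t)

/-- `ρ` is a `*`-upper gradient of `f`. -/
def IsStarUpperGradient (f ρ : X → ℝ) : Prop :=
  ∀ γ : Fragment X, LipschitzOnWith 1 γ.fn γ.dom →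
    ∀ᵐ t ∂(volume.restrict γ.dom),
      ∀ v : ℝ, HasDerivWithinAt (f ∘ γ.fn) v γ.dom t → |v| ≤ ρ (γ.fn t)

/-- The dyadic cube of side length `2^{-m}` in `[0,1)ⁿ` indexed by `k`. -/
def dyadicCube (n m : ℕ) (k : Fin n → Fin (2 ^ m)) : Set (E n) :=
  {x | ∀ i, (k i : ℝ) / 2 ^ m ≤ x i ∧ x i < ((k i : ℝ) + 1) / 2 ^ m}

variable {X : Type*} [MetricSpace X] [CompleteSpace X] [TopologicalSpace.SeparableSpace X]
  [MeasurableSpace X] [BorelSpace X]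

/-!
A set `N ⊆ ℝⁿ` of Hausdorff dimension `< n` is covered by Borel sets `N₁, …, Nₙ` such that `Nᵢ` is
negligible along curves whose velocity is almost parallel to the `i`-th axis. To see this, cover `N`
by cubes of finer and finer grids, with small total content, and colour the cubes by the coordinate
directions so that each line of direction `i` meets few cubes of colour `i`.

Let `φ : X → ℝⁿ` be Lipschitz with `n > dim_H X`. Applied to the sets `T (φ X)` for a dense sequence
of linear maps `T`, these covers show that at each point `x` the velocities seen through `φ` avoid,
in the sense of such negligible sets, the complement of some hyperplane `w⊥`. By compactness,
`⟪φ, w⟫` then has upper gradients that are arbitrarily small at `x`, and by assumption so is the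
pointwise Lipschitz constant of `⟪φ, w⟫` there. Hence no Lipschitz map into `ℝⁿ` is independent on
a set of positive measure.

Consequently almost every point has a maximal `n` for which some Lipschitz `φ` into `ℝⁿ` is
independent there. For every Lipschitz `f` the map `(f, φ)` into `ℝⁿ⁺¹` is then dependent, which
says exactly that `f` is differentiable with respect to `φ`.
-/

/-! ### Colouring lattice points by directions -/

section Grid

variable {ι : Type*}

/-- The index of the grid cube of scale ratio `b`, `j` generations coarser, that contains the cube
of index `Q`. -/
def ancestor (b j : ℕ) (Q : ι → ℤ) : ι → ℤ := fun l => Q l / (b : ℤ) ^ j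

lemma ancestor_zero (b : ℕ) (Q : ι → ℤ) : ancestor b 0 Q = Q := by
  funext l; simp [ancestor]

lemma ancestor_ancestor (b i j : ℕ) (Q : ι → ℤ) :
    ancestor b i (ancestor b j Q) = ancestor b (j + i) Q := by
  funext l
  simp only [ancestor, pow_add]
  exact Int.ediv_ediv_of_nonneg (by positivity)

/-- At each of the `m` finest generations, the cubes of the family `S` inside a common cube of the
next coarser generation lie in neighbouring lines of direction `i`. This is how a curve almost
parallel to the `i`-th axis meets the grid. -/
def IsSteepFamily (b : ℕ) (i : ι) (m : ℕ) (S : Finset (ι → ℤ)) : Prop :=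
  ∀ j < m, ∀ Q ∈ S, ∀ Q' ∈ S, ancestor b (j + 1) Q = ancestor b (j + 1) Q' →
    ∀ l, l ≠ i → |ancestor b j Q l - ancestor b j Q' l| ≤ 1

lemma IsSteepFamily.mono {b m m' : ℕ} {i : ι} {S S' : Finset (ι → ℤ)}
    (hS : IsSteepFamily b i m S) (hm : m' ≤ m) (hS' : S' ⊆ S) : IsSteepFamily b i m' S' :=
  fun j hj Q hQ Q' hQ' => hS j (hj.trans_le hm) Q (hS' hQ) Q' (hS' hQ')

end Grid

lemma exists_prod_le_pow_card {ι : Type*} [Fintype ι] [Nonempty ι] (w : ι → ℕ) :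
    ∃ i, ∏ j, w j ≤ w i ^ Fintype.card ι :=
  let ⟨i, hi⟩ := Finite.exists_max w
  ⟨i, Finset.prod_le_pow_card _ _ _ fun j _ => hi j⟩

lemma two_pow_le_mul_of_pow_le {n e m q w : ℕ} {s K : ℝ} (hn : n ≠ 0) (hK : 1 ≤ K)
    (hs : s * (e + 2 : ℕ) ≤ n * e) {p c : ℕ} (hp : p ≠ 0) (hc : c = 2 ^ ((n + 2) * p))
    (hq : (q : ℝ) ≤ K * (((c ^ (e + 2) : ℕ) : ℝ) ^ m) ^ s)
    (hqw : ((c ^ (e + 1)) ^ n) ^ m ≤ q * w ^ (n * p)) :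
    (2 : ℝ) ^ ((n + 2) * m) ≤ K * w := by
  have hc0 : (0 : ℝ) < c := by rw [hc]; positivity
  have hc1 : (1 : ℝ) ≤ c := by exact_mod_cast Nat.one_le_iff_ne_zero.2 (by rw [hc]; positivity)
  have hdim : (((c ^ (e + 2) : ℕ) : ℝ) ^ m) ^ s ≤ (c : ℝ) ^ (n * e * m) := by
    rw [Nat.cast_pow, ← pow_mul, ← Real.rpow_natCast, ← Real.rpow_mul hc0.le, ← Real.rpow_natCast]
    refine Real.rpow_le_rpow_of_exponent_le hc1 ?_
    calc (((e + 2) * m : ℕ) : ℝ) * s = s * (e + 2 : ℕ) * m := by push_cast; ring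
      _ ≤ n * e * m := by gcongr
      _ = ((n * e * m : ℕ) : ℝ) := by push_cast; ring
  have hpow : (c : ℝ) ^ (n * m) ≤ K * (w : ℝ) ^ (n * p) := by
    refine le_of_mul_le_mul_right ?_ (pow_pos hc0 (n * e * m))
    calc (c : ℝ) ^ (n * m) * c ^ (n * e * m) = ((c ^ (e + 1)) ^ n) ^ m := by ring
      _ ≤ q * (w : ℝ) ^ (n * p) := by exact_mod_cast hqw
      _ ≤ K * c ^ (n * e * m) * (w : ℝ) ^ (n * p) := by gcongr; exact hq.trans (by gcongr)
      _ = K * (w : ℝ) ^ (n * p) * c ^ (n * e * m) := by ring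
  have hnp : n * p ≠ 0 := mul_ne_zero hn hp
  refine le_of_pow_le_pow_left₀ hnp (by positivity) ?_
  calc ((2 : ℝ) ^ ((n + 2) * m)) ^ (n * p) = (c : ℝ) ^ (n * m) := by rw [hc]; push_cast; ring
    _ ≤ K * (w : ℝ) ^ (n * p) := hpow
    _ ≤ K ^ (n * p) * (w : ℝ) ^ (n * p) := by gcongr; exact le_self_pow₀ hK hnp
    _ = (K * w) ^ (n * p) := (mul_pow _ _ _).symm

section Lattice

open scoped Finset

variable {ι α : Type*} [Fintype ι] [DecidableEq ι]

lemma pow_card_le_card_filter [DecidableEq α] {t : ℕ} {S : Finset (ι → α)}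
    (hS : ∀ x ∈ S, ∀ i, t ≤ #{y ∈ S | ∀ l, l ≠ i → y l = x l}) (J : Finset ι) :
    ∀ x ∈ S, t ^ #J ≤ #{y ∈ S | ∀ l, l ∉ J → y l = x l} := by
  induction J using Finset.induction_on with
  | empty =>
    intro x hx
    rw [Finset.card_empty, pow_zero, Nat.one_le_iff_ne_zero, Finset.card_ne_zero]
    exact ⟨x, by simp [hx]⟩
  | insert i J hi ih =>
    intro x hx
    let line : Finset (ι → α) := {y ∈ S | ∀ l, l ≠ i → y l = x l}
    let slice : (ι → α) → Finset (ι → α) := fun y => {z ∈ S | ∀ l, l ∉ J → z l = y l}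
    have hdisj : (line : Set (ι → α)).PairwiseDisjoint slice := by
      refine fun y hy y' hy' hne => Finset.disjoint_left.2 fun z hz hz' => hne (funext fun l => ?_)
      simp only [line, slice, Finset.coe_filter, Finset.mem_filter, mem_ofPred_eq]
        at hy hy' hz hz'
      rcases eq_or_ne l i with rfl | hl
      · exact (hz.2 l hi).symm.trans (hz'.2 l hi)
      · rw [hy.2 l hl, hy'.2 l hl]
    calc t ^ #(insert i J) = t * t ^ #J := by rw [Finset.card_insert_of_notMem hi, pow_succ']
      _ ≤ #line * t ^ #J := Nat.mul_le_mul_right _ (hS x hx i)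
      _ ≤ ∑ y ∈ line, #(slice y) :=
        Finset.card_nsmul_le_sum _ _ _ fun y hy => ih y (Finset.mem_filter.1 hy).1
      _ = #(line.biUnion slice) := (Finset.card_biUnion hdisj).symm
      _ ≤ _ := by
        refine Finset.card_le_card fun z hz => ?_
        simp only [line, slice, Finset.mem_biUnion, Finset.mem_filter, Finset.mem_insert, not_or]
          at hz ⊢
        obtain ⟨y, ⟨-, hyx⟩, hz, hzy⟩ := hz
        exact ⟨hz, fun l hl => (hzy l hl.2).trans (hyx l hl.1)⟩

lemma pow_card_le_card_of_forall_line [DecidableEq α] {t : ℕ} {S : Finset (ι → α)}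
    (hne : S.Nonempty) (hS : ∀ x ∈ S, ∀ i, t ≤ #{y ∈ S | ∀ l, l ≠ i → y l = x l}) :
    t ^ Fintype.card ι ≤ #S := by
  obtain ⟨x, hx⟩ := hne
  exact (pow_card_le_card_filter hS Finset.univ x hx).trans (Finset.card_filter_le _ _)

lemma exists_directional_colouring [DecidableEq α] [Nonempty ι] {t : ℕ} (S : Finset (ι → α))
    (hS : #S < t ^ Fintype.card ι) :
    ∃ col : (ι → α) → ι, ∀ i, ∀ y : ι → α, #{u ∈ S | col u = i ∧ ∀ l, l ≠ i → u l = y l} ≤ t := by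
  induction S using Finset.strongInduction with
  | H S ih =>
    rcases S.eq_empty_or_nonempty with rfl | hne
    · exact ⟨fun _ => Classical.arbitrary ι, by simp⟩
    obtain ⟨x, hx, i, hi⟩ : ∃ x ∈ S, ∃ i, #{y ∈ S | ∀ l, l ≠ i → y l = x l} ≤ t := by
      by_contra! hcon
      exact (pow_card_le_card_of_forall_line hne fun x hx i => (hcon x hx i).le).not_gt hS
    let line : Finset (ι → α) := {y ∈ S | ∀ l, l ≠ i → y l = x l}
    have hlt : S \ line ⊂ S :=
      Finset.sdiff_ssubset (Finset.filter_subset _ _) ⟨x, by simp [line, hx]⟩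
    obtain ⟨col, hcol⟩ := ih (S \ line) hlt ((Finset.card_lt_card hlt).trans hS)
    refine ⟨fun u => if u ∈ line then i else col u, fun j y => ?_⟩
    by_cases hy : j = i ∧ ∀ l, l ≠ i → x l = y l
    · obtain ⟨rfl, hy⟩ := hy
      refine (Finset.card_le_card fun u hu => ?_).trans hi
      simp only [Finset.mem_filter] at hu ⊢
      exact ⟨hu.1, fun l hl => (hu.2.2 l hl).trans (hy l hl).symm⟩
    · refine (Finset.card_le_card fun u hu => ?_).trans (hcol j y)
      simp only [Finset.mem_filter, Finset.mem_sdiff] at hu ⊢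
      have hu_line : u ∉ line := by
        intro hul
        rw [if_pos hul] at hu
        obtain rfl := hu.2.1
        exact hy ⟨rfl, fun l hl => by rw [← hu.2.2 l hl, (Finset.mem_filter.1 hul).2 l hl]⟩
      rw [if_neg hu_line] at hu
      exact ⟨⟨hu.1, hu_line⟩, hu.2⟩

lemma card_heavy_fibers_lt {β : Type*} [DecidableEq β] {T : ℕ} (hT : 0 < T) (s : Finset α)
    (f : α → β) : #{u ∈ s.image f | #s < T * #{x ∈ s | f x = u}} < T := by
  set H : Finset β := {u ∈ s.image f | #s < T * #{x ∈ s | f x = u}}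
  by_contra! hTH
  have hfibers : ∑ u ∈ H, #{x ∈ s | f x = u} ≤ #s := by
    rw [Finset.card_eq_sum_card_image f s]
    exact Finset.sum_le_sum_of_subset (Finset.filter_subset _ _)
  have hheavy : #H * (#s + 1) ≤ T * #s :=
    calc #H * (#s + 1) ≤ ∑ u ∈ H, T * #{x ∈ s | f x = u} :=
          Finset.card_nsmul_le_sum H _ (#s + 1) fun u hu => (Finset.mem_filter.1 hu).2
      _ ≤ T * #s := by rw [← Finset.mul_sum]; exact Nat.mul_le_mul_left _ hfibers
  nlinarith

lemma card_le_of_transversal {k : ℕ} {i : ι} {U : Finset (ι → ℤ)}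
    (hU : ∀ u ∈ U, ∀ u' ∈ U, ∀ l, l ≠ i → |u l - u' l| ≤ 1)
    (hk : ∀ y : ι → ℤ, #{u ∈ U | ∀ l, l ≠ i → u l = y l} ≤ k) :
    #U ≤ k * 2 ^ Fintype.card ι := by
  -- Points of `U` with the same coordinate parities lie on a common line in direction `i`.
  have hparity : ∀ p : ι → Bool, #{u ∈ U | (fun l => decide (u l % 2 = 0)) = p} ≤ k := by
    intro p
    by_cases hne : ∃ u₀ ∈ U, (fun l => decide (u₀ l % 2 = 0)) = p
    · obtain ⟨u₀, hu₀, rfl⟩ := hne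
      refine (Finset.card_le_card fun u hu => ?_).trans (hk u₀)
      obtain ⟨hu, hpar⟩ := Finset.mem_filter.1 hu
      refine Finset.mem_filter.2 ⟨hu, fun l hl => ?_⟩
      have hdist := abs_le.1 (hU u hu u₀ hu₀ l hl)
      have hl_par := congrFun hpar l
      simp only [decide_eq_decide] at hl_par
      omega
    · push Not at hne
      rw [Finset.filter_eq_empty_iff.2 fun u hu => hne u hu]
      exact Nat.zero_le k
  simpa using Finset.card_le_mul_card_image_of_maps_to (t := Finset.univ)
    (fun _ _ => Finset.mem_univ _) k fun p _ => hparity p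

lemma card_filter_line_le_of_ancestor_eq {b : ℕ} (hb : 0 < b) (i : ι) {v : ι → ℤ}
    {U : Finset (ι → ℤ)} (hU : ∀ u ∈ U, ancestor b 1 u = v) (y : ι → ℤ) :
    #{u ∈ U | ∀ l, l ≠ i → u l = y l} ≤ b := by
  have hcard : #(Finset.Ico (v i * b) (v i * b + b)) = b := by simp
  rw [← hcard]
  refine Finset.card_le_card_of_injOn (fun u => u i) (fun u hu => ?_) fun u hu u' hu' he => ?_
  · have hb' : (0 : ℤ) < b := by exact_mod_cast hb
    have hui : u i / (b : ℤ) = v i := by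
      simpa [ancestor] using congrFun (hU u (Finset.mem_filter.1 hu).1) i
    have hlow := Int.ediv_mul_le (u i) hb'.ne'
    have hup := Int.lt_ediv_add_one_mul_self (u i) hb'
    rw [hui] at hlow hup
    simp only [Finset.coe_Ico, mem_Ico]
    constructor <;> linarith
  · funext l
    rcases eq_or_ne l i with rfl | hl
    · exact he
    · rw [(Finset.mem_filter.1 hu).2 l hl, (Finset.mem_filter.1 hu').2 l hl]

end Lattice

/-! ### Directional weights on the tree of grid cubes -/

section Weights

open scoped Finset

variable {ι : Type*} [Fintype ι] [Nonempty ι]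

/- A child cube is heavy if it contains more than the fraction `t ^ (-n)` of the family. There are
fewer than `t ^ n` heavy children, so they can be coloured with at most `t` of each colour on every
line of that direction; a heavy child of colour `i` gets the factor `c` in direction `i`. -/
lemma exists_child_factors {α : Type*} {b c t p : ℕ} (hc : 0 < c) (ht : 0 < t)
    (hb : b = c * t) (hp : t ^ Fintype.card ι ≤ c ^ p) (s : Finset α) (f : α → ι → ℤ) :
    ∃ κ : ι → (ι → ℤ) → ℕ,
      (∀ i v, ∀ U : Finset (ι → ℤ), (∀ u ∈ U, ancestor b 1 u = v) →
        (∀ u ∈ U, ∀ u' ∈ U, ∀ l, l ≠ i → |u l - u' l| ≤ 1) →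
        ∑ u ∈ U, κ i u ≤ 2 ^ (Fintype.card ι + 1) * b) ∧
      ∀ u, t ^ Fintype.card ι * #{x ∈ s | f x = u} ≤ #s * (∏ i, κ i u) ^ p := by
  classical
  set T := t ^ Fintype.card ι
  let H : Finset (ι → ℤ) := {u ∈ s.image f | #s < T * #{x ∈ s | f x = u}}
  obtain ⟨col, hcol⟩ := exists_directional_colouring H (card_heavy_fibers_lt (pow_pos ht _) s f)
  refine ⟨fun i u => if u ∈ H ∧ col u = i then c else 1, fun i v U hv hU => ?_, fun u => ?_⟩
  · have hall : #U ≤ b * 2 ^ Fintype.card ι :=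
      card_le_of_transversal hU
        (card_filter_line_le_of_ancestor_eq (by rw [hb]; positivity) i hv)
    have hcoloured : #{u ∈ U | u ∈ H ∧ col u = i} ≤ t * 2 ^ Fintype.card ι := by
      refine card_le_of_transversal (fun u hu u' hu' =>
        hU u (Finset.mem_filter.1 hu).1 u' (Finset.mem_filter.1 hu').1) fun y => ?_
      refine (Finset.card_le_card fun u hu => ?_).trans (hcol i y)
      simp only [Finset.mem_filter] at hu ⊢
      exact ⟨hu.1.2.1, hu.1.2.2, hu.2⟩
    calc ∑ u ∈ U, (if u ∈ H ∧ col u = i then c else 1)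
        ≤ ∑ u ∈ U, (1 + if u ∈ H ∧ col u = i then c else 0) :=
          Finset.sum_le_sum fun u _ => by split_ifs <;> omega
      _ = #U + #{u ∈ U | u ∈ H ∧ col u = i} * c := by
          rw [Finset.sum_add_distrib, ← Finset.sum_filter, Finset.sum_const, Finset.sum_const,
            smul_eq_mul, smul_eq_mul, mul_one]
      _ ≤ b * 2 ^ Fintype.card ι + t * 2 ^ Fintype.card ι * c := by gcongr
      _ = 2 ^ (Fintype.card ι + 1) * b := by rw [hb]; ring
  · by_cases hu : u ∈ H
    · have hprod : ∏ i, (if u ∈ H ∧ col u = i then c else 1) = c := by simp [hu]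
      rw [hprod, mul_comm]
      exact Nat.mul_le_mul (Finset.card_filter_le _ _) hp
    · simp only [hu, false_and, if_false, Finset.prod_const_one, one_pow, mul_one]
      by_cases himage : u ∈ s.image f
      · exact not_lt.1 fun hlt => hu (Finset.mem_filter.2 ⟨himage, hlt⟩)
      · have hempty : ({x ∈ s | f x = u} : Finset α) = ∅ :=
          Finset.filter_eq_empty_iff.2 fun x hx hxu => himage (Finset.mem_image.2 ⟨x, hx, hxu⟩)
        simp [hempty]

lemma exists_directional_weights {b c t p : ℕ} (hc : 0 < c) (ht : 0 < t)
    (hb : b = c * t) (hp : t ^ Fintype.card ι ≤ c ^ p) (m : ℕ) :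
    ∀ 𝒬 : Finset (ι → ℤ), ∃ w : ι → (ι → ℤ) → ℕ,
      (∀ i v, ∀ S : Finset (ι → ℤ), (∀ Q ∈ S, ancestor b m Q = v) → IsSteepFamily b i m S →
        ∑ Q ∈ S, w i Q ≤ (2 ^ (Fintype.card ι + 1) * b) ^ m) ∧
      ∀ Q ∈ 𝒬, (t ^ Fintype.card ι) ^ m ≤ #𝒬 * (∏ i, w i Q) ^ p := by
  induction m with
  | zero =>
    refine fun 𝒬 => ⟨fun _ _ => 1, fun i v S hv _ => ?_, fun Q hQ => ?_⟩
    · simp only [ancestor_zero] at hv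
      simpa using Finset.card_le_one.2 fun Q hQ Q' hQ' => (hv Q hQ).trans (hv Q' hQ').symm
    · simpa [Finset.card_pos] using ⟨Q, hQ⟩
  | succ m ih =>
    intro 𝒬
    obtain ⟨κ, hκ, hκ_fiber⟩ := exists_child_factors hc ht hb hp 𝒬 (ancestor b m)
    choose w hw hw_leaf using fun u => ih {Q ∈ 𝒬 | ancestor b m Q = u}
    refine ⟨fun i Q => κ i (ancestor b m Q) * w (ancestor b m Q) i Q, fun i v S hv hS => ?_,
      fun Q hQ => ?_⟩
    · have hchild : ∀ u ∈ S.image (ancestor b m), ancestor b 1 u = v :=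
        Finset.forall_mem_image.2 fun Q hQ => by rw [ancestor_ancestor, hv Q hQ]
      have htransversal : ∀ u ∈ S.image (ancestor b m), ∀ u' ∈ S.image (ancestor b m),
          ∀ l, l ≠ i → |u l - u' l| ≤ 1 :=
        Finset.forall_mem_image.2 fun Q hQ => Finset.forall_mem_image.2 fun Q' hQ' =>
          hS m m.lt_succ_self Q hQ Q' hQ' ((hv Q hQ).trans (hv Q' hQ').symm)
      calc ∑ Q ∈ S, κ i (ancestor b m Q) * w (ancestor b m Q) i Q
          = ∑ u ∈ S.image (ancestor b m), κ i u * ∑ Q ∈ S with ancestor b m Q = u, w u i Q := by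
            rw [← Finset.sum_fiberwise_of_maps_to fun Q => Finset.mem_image_of_mem (ancestor b m)]
            refine Finset.sum_congr rfl fun u _ => ?_
            rw [Finset.mul_sum]
            exact Finset.sum_congr rfl fun Q hQ => by rw [(Finset.mem_filter.1 hQ).2]
        _ ≤ ∑ u ∈ S.image (ancestor b m), κ i u * (2 ^ (Fintype.card ι + 1) * b) ^ m :=
            Finset.sum_le_sum fun u _ => Nat.mul_le_mul_left _ <|
              hw u i u _ (fun Q hQ => (Finset.mem_filter.1 hQ).2)
                (hS.mono m.le_succ (Finset.filter_subset _ _))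
        _ ≤ (2 ^ (Fintype.card ι + 1) * b) ^ (m + 1) := by
            rw [← Finset.sum_mul, pow_succ' (2 ^ (Fintype.card ι + 1) * b)]
            exact Nat.mul_le_mul_right _ (hκ i v _ hchild htransversal)
    · set u := ancestor b m Q
      calc (t ^ Fintype.card ι) ^ (m + 1)
          ≤ t ^ Fintype.card ι * (#{Q ∈ 𝒬 | ancestor b m Q = u} * (∏ i, w u i Q) ^ p) := by
            rw [pow_succ']
            exact Nat.mul_le_mul_left _ (hw_leaf u Q (Finset.mem_filter.2 ⟨hQ, rfl⟩))
        _ ≤ #𝒬 * (∏ i, κ i u) ^ p * (∏ i, w u i Q) ^ p := by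
            rw [← mul_assoc]
            exact Nat.mul_le_mul_right _ (hκ_fiber u)
        _ = #𝒬 * (∏ i, κ i u * w u i Q) ^ p := by rw [Finset.prod_mul_distrib, mul_pow, mul_assoc]

/- With `c` a large power of `2`, `t = c ^ (e + 1)` and `b = c ^ (e + 2)`, the bound
`#𝒬 ≤ K * b ^ (m * s)` with `s * (e + 2) ≤ n * e` makes the largest directional weight of every
cube at least `2 ^ ((n + 2) * m) / K`, which beats the factors `2 ^ (n + 1)` lost at each
generation. -/
lemma exists_steep_colouring {s : ℝ} (hs : s < Fintype.card ι) :
    ∃ b : ℕ, 2 ≤ b ∧ ∀ (m : ℕ) (𝒬 : Finset (ι → ℤ)) (K : ℝ), 1 ≤ K →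
      (#𝒬 : ℝ) ≤ K * ((b : ℝ) ^ m) ^ s → ∃ col : (ι → ℤ) → ι, ∀ i v, ∀ S ⊆ 𝒬,
        (∀ Q ∈ S, col Q = i ∧ ancestor b m Q = v) → IsSteepFamily b i m S →
          (#S : ℝ) * 2 ^ m ≤ K * b ^ m := by
  set n := Fintype.card ι
  have hn0 : n ≠ 0 := Fintype.card_ne_zero
  obtain ⟨e, he⟩ : ∃ e : ℕ, s * (e + 2 : ℕ) ≤ n * e := by
    obtain ⟨e, he⟩ := exists_nat_ge (2 * s / (n - s))
    rw [div_le_iff₀ (sub_pos.2 hs)] at he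
    exact ⟨e, by push_cast; linarith⟩
  set p := n * (e + 1) with hp
  have hp0 : p ≠ 0 := by positivity
  set c := 2 ^ ((n + 2) * p) with hc
  have hc2 : 2 ≤ c := Nat.le_self_pow (by positivity) 2
  set b := c ^ (e + 2) with hb
  refine ⟨b, hc2.trans (Nat.le_self_pow (by omega) c), fun m 𝒬 K hK h𝒬 => ?_⟩
  obtain ⟨w, hw_sum, hw_leaf⟩ := exists_directional_weights (ι := ι) (b := b) (p := p)
    (by omega : 0 < c) (pow_pos (by omega) (e + 1) : 0 < c ^ (e + 1)) (by rw [hb]; ring)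
    (by rw [← pow_mul, hp, mul_comm]) m 𝒬
  choose col hcol using fun Q => exists_prod_le_pow_card fun i => w i Q
  refine ⟨col, fun i v S hS𝒬 hS hsteep => ?_⟩
  have hweight : ∀ Q ∈ S, (2 : ℝ) ^ ((n + 2) * m) ≤ K * w i Q := by
    intro Q hQ
    refine two_pow_le_mul_of_pow_le hn0 hK he hp0 hc h𝒬 ((hw_leaf Q (hS𝒬 hQ)).trans ?_)
    rw [← (hS Q hQ).1, pow_mul _ n p]
    exact Nat.mul_le_mul_left _ (Nat.pow_le_pow_left (hcol Q) p)
  refine le_of_mul_le_mul_right ?_ (pow_pos (by norm_num : (0 : ℝ) < 2) ((n + 1) * m))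
  calc (#S : ℝ) * 2 ^ m * 2 ^ ((n + 1) * m) = #S • (2 : ℝ) ^ ((n + 2) * m) := by
        rw [nsmul_eq_mul]; ring
    _ ≤ ∑ Q ∈ S, K * w i Q := Finset.card_nsmul_le_sum _ _ _ hweight
    _ = K * (∑ Q ∈ S, w i Q : ℕ) := by rw [← Finset.mul_sum, Nat.cast_sum]
    _ ≤ K * ((2 ^ (n + 1) * b) ^ m : ℕ) := by
        gcongr
        exact hw_sum i v S (fun Q hQ => (hS Q hQ).2) hsteep
    _ = K * b ^ m * 2 ^ ((n + 1) * m) := by push_cast; ring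

end Weights

/-! ### Covering null sets of Hausdorff measure by grid cubes -/

lemma exists_closedBall_cover_of_hausdorffMeasure_eq_zero {Y : Type*} [MetricSpace Y]
    [MeasurableSpace Y] [BorelSpace Y] [Nonempty Y] {s : ℝ} (hs : 0 < s) {N : Set Y}
    (hN : μH[s] N = 0) {ε : ℝ≥0∞} (hε : ε ≠ 0) :
    ∃ (z : ℕ → Y) (r : ℕ → ℝ), (∀ k, 0 < r k) ∧ ∑' k, ENNReal.ofReal (r k) ^ s ≤ ε ∧
      ∀ x ∈ N, ∃ k, dist x (z k) ≤ r k := by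
  classical
  obtain ⟨t, hcov, hdiam, hsum⟩ : ∃ t : ℕ → Set Y, N ⊆ ⋃ k, t k ∧ (∀ k, ediam (t k) ≤ 1) ∧
      ∑' k, ⨆ _ : (t k).Nonempty, ediam (t k) ^ s < ε / 2 := by
    rw [Measure.hausdorffMeasure_apply] at hN
    have hlt := (le_iSup₂_of_le (1 : ℝ≥0∞) one_pos le_rfl).trans_lt
      (hN.symm ▸ ENNReal.half_pos hε)
    simpa only [iInf_lt_iff, exists_prop] using hlt
  obtain ⟨η, hη, hηsum⟩ := ENNReal.exists_pos_sum_of_countable (ENNReal.half_pos hε).ne' ℕ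
  let d : ℕ → ℝ≥0∞ := fun k => ⨆ _ : (t k).Nonempty, ediam (t k) ^ s
  have hd : ∀ k, d k ≤ 1 := fun k => iSup_le fun _ => ENNReal.rpow_le_one (hdiam k) hs.le
  have hfin : ∀ k, (d k + η k) ^ (1 / s) ≠ ⊤ := fun k =>
    ENNReal.rpow_ne_top_of_nonneg (by positivity)
      (ENNReal.add_ne_top.2 ⟨ne_top_of_le_ne_top ENNReal.one_ne_top (hd k), ENNReal.coe_ne_top⟩)
  have hpos : ∀ k, (d k + η k) ^ (1 / s) ≠ 0 := fun k => by
    have := (hη k).ne'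
    simp [ENNReal.rpow_eq_zero_iff, this, hs.not_gt]
  refine ⟨fun k => if h : (t k).Nonempty then h.some else Classical.arbitrary Y,
    fun k => ((d k + η k) ^ (1 / s)).toReal,
    fun k => ENNReal.toReal_pos (hpos k) (hfin k), ?_, fun x hx => ?_⟩
  · have hr : ∀ k, ENNReal.ofReal ((d k + η k) ^ (1 / s)).toReal ^ s = d k + η k := fun k => by
      rw [ENNReal.ofReal_toReal (hfin k), ← ENNReal.rpow_mul, one_div, inv_mul_cancel₀ hs.ne',
        ENNReal.rpow_one]
    simp_rw [hr]
    rw [ENNReal.tsum_add, ← ENNReal.add_halves ε]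
    exact add_le_add hsum.le hηsum.le
  · obtain ⟨k, hk⟩ := mem_iUnion.1 (hcov hx)
    have hne : (t k).Nonempty := ⟨x, hk⟩
    refine ⟨k, ?_⟩
    simp only [dif_pos hne]
    rw [dist_edist]
    refine ENNReal.toReal_mono (hfin k) ((edist_le_ediam_of_mem hk hne.some_mem).trans ?_)
    rw [one_div, ENNReal.le_rpow_inv_iff hs]
    exact (le_iSup (fun _ : (t k).Nonempty => ediam (t k) ^ s) hne).trans le_self_add

lemma exists_vitali_cover_of_hausdorffMeasure_eq_zero {Y : Type*} [MetricSpace Y]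
    [MeasurableSpace Y] [BorelSpace Y] [Nonempty Y] {s : ℝ} (hs : 0 < s) {N : Set Y}
    (hN : μH[s] N = 0) :
    ∃ (z : ℕ × ℕ → Y) (r : ℕ × ℕ → ℝ), (∀ p, 0 < r p) ∧ ∑' p, ENNReal.ofReal (r p) ^ s ≤ 1 ∧
      ∀ x ∈ N, ∀ δ > 0, ∃ p, r p < δ ∧ dist x (z p) ≤ r p := by
  choose z r hr hsum hcov using fun j : ℕ =>
    exists_closedBall_cover_of_hausdorffMeasure_eq_zero hs hN (ε := 2⁻¹ ^ (j + 1))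
      (pow_ne_zero _ (by simp))
  refine ⟨fun p => z p.1 p.2, fun p => r p.1 p.2, fun p => hr _ _, ?_, fun x hx δ hδ => ?_⟩
  · rw [ENNReal.tsum_prod (f := fun j k => ENNReal.ofReal (r j k) ^ s)]
    exact (ENNReal.tsum_le_tsum hsum).trans
      (by simp [ENNReal.tsum_geometric_add_one, ENNReal.inv_mul_cancel])
  have hpow : Tendsto (fun j : ℕ => (2⁻¹ : ℝ≥0∞) ^ j) atTop (𝓝 0) :=
    ENNReal.tendsto_pow_atTop_nhds_zero_of_lt_one (by simp)
  obtain ⟨j, hj⟩ := (hpow.eventually_lt_const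
    (ENNReal.rpow_pos (p := s) (ENNReal.ofReal_pos.2 hδ) ENNReal.ofReal_ne_top)).exists
  obtain ⟨k, hk⟩ := hcov j x hx
  refine ⟨(j, k), ?_, hk⟩
  have hlt : ENNReal.ofReal (r j k) ^ s < ENNReal.ofReal δ ^ s :=
    ((ENNReal.le_tsum k).trans (hsum j)).trans_lt
      ((pow_le_pow_right_of_le_one' (by simp) j.le_succ).trans_lt hj)
  exact (ENNReal.ofReal_lt_ofReal_iff hδ).1 ((ENNReal.rpow_lt_rpow_iff hs).1 hlt)

lemma exists_finset_card_le_rpow {α : Type*} {r : α → ℝ} (hr : ∀ p, 0 < r p) {s B : ℝ}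
    (hs : 0 ≤ s) (hB : 0 < B) (hsum : ∑' p, ENNReal.ofReal (r p) ^ s ≤ 1) :
    ∃ I : Finset α, (I.card : ℝ) ≤ B ^ s ∧ ∀ p, B⁻¹ ≤ r p → p ∈ I := by
  have hε : ENNReal.ofReal (B⁻¹ ^ s) = (ENNReal.ofReal (B ^ s))⁻¹ := by
    rw [Real.inv_rpow hB.le, ENNReal.ofReal_inv_of_pos (by positivity)]
  obtain ⟨hfin, hcard⟩ := ENNReal.finset_card_const_le_le_of_tsum_le ENNReal.one_ne_top hsum
    (ε := (ENNReal.ofReal (B ^ s))⁻¹) (by simp)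
  refine ⟨hfin.toFinset, ?_, fun p hp => ?_⟩
  · rw [one_div, inv_inv, ← ENNReal.ofReal_natCast] at hcard
    exact (ENNReal.ofReal_le_ofReal_iff (by positivity)).1 hcard
  · rw [Finite.mem_toFinset, mem_ofPred_eq, ← hε, ENNReal.ofReal_rpow_of_pos (hr p)]
    exact ENNReal.ofReal_le_ofReal (Real.rpow_le_rpow (by positivity) hp hs)

/-- The index of the grid cube of side `b⁻ᵐ` that contains the point `y`. -/
def gridIndex {ι : Type*} (b m : ℕ) (y : ι → ℝ) : ι → ℤ := fun l => ⌊(b : ℝ) ^ m * y l⌋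

lemma measurable_gridIndex {ι : Type*} (b m : ℕ) :
    Measurable (gridIndex b m : (ι → ℝ) → ι → ℤ) :=
  measurable_pi_lambda _ fun l =>
    Int.measurable_floor.comp (measurable_const.mul (measurable_pi_apply l))

lemma ancestor_gridIndex {ι : Type*} {b : ℕ} (hb : 0 < b) (k j : ℕ) (y : ι → ℝ) :
    ancestor b j (gridIndex b (k + j) y) = gridIndex b k y := by
  funext l
  have hfloor := Int.floor_div_natCast ((b : ℝ) ^ (k + j) * y l) (b ^ j)
  push_cast at hfloor
  simp only [ancestor, gridIndex]
  rw [← hfloor, pow_add, mul_right_comm, mul_div_cancel_right₀ _ (by positivity)]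

lemma abs_floor_sub_floor_le_one {x y : ℝ} (h : |x - y| ≤ 1) : |⌊x⌋ - ⌊y⌋| ≤ 1 := by
  obtain ⟨h₁, h₂⟩ := abs_le.1 h
  have hyx : ⌊y⌋ ≤ ⌊x⌋ + 1 := by
    rw [← Int.floor_add_one]; exact Int.floor_le_floor (by linarith)
  have hxy : ⌊x⌋ ≤ ⌊y⌋ + 1 := by
    rw [← Int.floor_add_one]; exact Int.floor_le_floor (by linarith)
  exact abs_le.2 ⟨by linarith, by linarith⟩

open scoped Finset in
lemma exists_grid_cover {ι : Type*} [Fintype ι] {b : ℕ} (hb : 2 ≤ b) {s : ℝ}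
    (hs : 0 < s) {N : Set (ι → ℝ)} (hN : μH[s] N = 0) :
    ∃ 𝒬 : ℕ → Finset (ι → ℤ),
      (∀ m, (#(𝒬 m) : ℝ) ≤ 3 ^ Fintype.card ι * (b : ℝ) ^ s * ((b : ℝ) ^ m) ^ s) ∧
      ∀ y ∈ N, ∃ᶠ m in atTop, gridIndex b m y ∈ 𝒬 m := by
  classical
  obtain ⟨z, r, hr, hsum, hcov⟩ := exists_vitali_cover_of_hausdorffMeasure_eq_zero hs hN
  have hb0 : (0 : ℝ) < b := by positivity
  have hβ0 : (0 : ℝ) < (b : ℝ)⁻¹ := by positivity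
  have hβ1 : (b : ℝ)⁻¹ < 1 := inv_lt_one_of_one_lt₀ (by exact_mod_cast hb)
  choose I hIcard hImem using fun m : ℕ =>
    exists_finset_card_le_rpow hr hs.le (pow_pos hb0 (m + 1)) hsum
  let nearby : Finset (ι → ℤ) := Fintype.piFinset fun _ => Finset.Icc (-1) 1
  have hnearby : #nearby = 3 ^ Fintype.card ι := by simp [nearby]
  refine ⟨fun m => (I m ×ˢ nearby).image fun p => gridIndex b m (z p.1) + p.2, fun m => ?_,
    fun y hy => frequently_atTop.2 fun M => ?_⟩
  · calc _ ≤ ((#(I m) * 3 ^ Fintype.card ι : ℕ) : ℝ) := by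
          rw [← hnearby, ← Finset.card_product]
          exact_mod_cast Finset.card_image_le
      _ ≤ ((b : ℝ) ^ (m + 1)) ^ s * 3 ^ Fintype.card ι := by
          push_cast
          gcongr
          exact hIcard m
      _ = _ := by rw [pow_succ, Real.mul_rpow (by positivity) hb0.le]; ring
  · obtain ⟨p, hpM, hyp⟩ := hcov y hy ((b : ℝ)⁻¹ ^ M) (by positivity)
    obtain ⟨m, hm, hm'⟩ := exists_nat_pow_near_of_lt_one (hr p)
      (hpM.le.trans (pow_le_one₀ hβ0.le hβ1.le)) hβ0 hβ1
    have hMm : M < m + 1 := (pow_lt_pow_iff_right_of_lt_one₀ hβ0 hβ1).1 (hm.trans hpM)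
    refine ⟨m, by omega, Finset.mem_image.2 ⟨(p, gridIndex b m y - gridIndex b m (z p)), ?_,
      add_sub_cancel _ _⟩⟩
    refine Finset.mem_product.2 ⟨hImem m p (by rw [← inv_pow]; exact hm.le),
      Fintype.mem_piFinset.2 fun l => Finset.mem_Icc.2 (abs_le.1 ?_)⟩
    refine abs_floor_sub_floor_le_one ?_
    rw [← mul_sub, abs_mul, abs_of_pos (by positivity)]
    calc (b : ℝ) ^ m * |y l - z p l| ≤ (b : ℝ) ^ m * (b : ℝ)⁻¹ ^ m := by
          gcongr
          exact ((dist_le_pi_dist y (z p) l).trans hyp).trans hm'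
      _ = 1 := by rw [← mul_pow, mul_inv_cancel₀ hb0.ne', one_pow]

/-! ### Sets negligible along curves almost parallel to an axis -/

/-- On `s`, the path `p` moves with speed at least `δ` in direction `i`, and the chords of `p` have
slope at most `κ` over the `i`-th axis. -/
def IsSteepOn {ι : Type*} (κ δ : ℝ) (i : ι) (p : ℝ → ι → ℝ) (s : Set ℝ) : Prop :=
  ∀ t ∈ s, ∀ u ∈ s, δ * |t - u| ≤ |p t i - p u i| ∧
    ∀ l, l ≠ i → |p t l - p u l| ≤ κ * |p t i - p u i|

/-- Every path almost parallel to the `i`-th axis, in the sense of `IsSteepOn κ`, spends zero time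
in `A`. -/
def AxisNull {ι : Type*} (κ : ℝ) (i : ι) (A : Set (ι → ℝ)) : Prop :=
  ∀ (p : ℝ → ι → ℝ) (s : Set ℝ), ∀ δ > 0, IsSteepOn κ δ i p s → volume (s ∩ p ⁻¹' A) = 0

section Steep

variable {ι : Type*} {b : ℕ} {i : ι} {δ κ : ℝ} {p : ℝ → ι → ℝ} {s : Set ℝ}

lemma IsSteepOn.mono {s' : Set ℝ} (h : IsSteepOn κ δ i p s) (hs : s' ⊆ s) :
    IsSteepOn κ δ i p s' := fun t ht u hu => h t (hs ht) u (hs hu)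

lemma pow_mul_abs_sub_lt_one_of_gridIndex_eq {m : ℕ} {y z : ι → ℝ}
    (h : gridIndex b m y = gridIndex b m z) (l : ι) : (b : ℝ) ^ m * |y l - z l| < 1 := by
  have := Int.abs_sub_lt_one_of_floor_eq_floor (congrFun h l)
  rwa [← mul_sub, abs_mul, abs_of_nonneg (by positivity)] at this

lemma IsSteepOn.isSteepFamily (hb : 0 < b) (h : IsSteepOn (b : ℝ)⁻¹ δ i p s) {m : ℕ}
    {S : Finset (ι → ℤ)} (hS : ∀ Q ∈ S, ∃ t ∈ s, gridIndex b m (p t) = Q) :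
    IsSteepFamily b i m S := by
  have hb0 : (0 : ℝ) < b := by exact_mod_cast hb
  intro j hj Q hQ Q' hQ' hanc l hl
  obtain ⟨t, ht, rfl⟩ := hS Q hQ
  obtain ⟨u, hu, rfl⟩ := hS Q' hQ'
  obtain ⟨k, rfl⟩ : ∃ k, m = k + (j + 1) := ⟨m - (j + 1), by omega⟩
  rw [ancestor_gridIndex hb, ancestor_gridIndex hb] at hanc
  rw [show k + (j + 1) = k + 1 + j by ring, ancestor_gridIndex hb, ancestor_gridIndex hb]
  refine abs_floor_sub_floor_le_one ?_
  rw [← mul_sub, abs_mul, abs_of_pos (by positivity)]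
  calc (b : ℝ) ^ (k + 1) * |p t l - p u l|
      ≤ (b : ℝ) ^ (k + 1) * ((b : ℝ)⁻¹ * |p t i - p u i|) := by
        gcongr
        exact (h t ht u hu).2 l hl
    _ = (b : ℝ) ^ k * |p t i - p u i| := by
        rw [pow_succ, mul_assoc, mul_inv_cancel_left₀ hb0.ne']
    _ ≤ 1 := (pow_mul_abs_sub_lt_one_of_gridIndex_eq hanc i).le

lemma IsSteepOn.volume_gridIndex_eq_le (hb : 0 < b) (hδ : 0 < δ) (h : IsSteepOn κ δ i p s)
    (m : ℕ) (Q : ι → ℤ) :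
    volume {t ∈ s | gridIndex b m (p t) = Q} ≤ ENNReal.ofReal (((b : ℝ) ^ m)⁻¹ / δ) := by
  refine (Real.volume_le_diam _).trans (ediam_le fun t ht u hu => ?_)
  rw [edist_dist, Real.dist_eq]
  refine ENNReal.ofReal_le_ofReal ((le_div_iff₀' hδ).2 ((h t ht.1 u hu.1).1.trans ?_))
  rw [← one_div, le_div_iff₀' (by positivity)]
  exact (pow_mul_abs_sub_lt_one_of_gridIndex_eq (ht.2.trans hu.2.symm) i).le

open scoped Finset in
lemma IsSteepOn.volume_le_of_finset (hb : 0 < b) (hδ : 0 < δ) (h : IsSteepOn κ δ i p s) {m : ℕ}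
    {S : Finset (ι → ℤ)} (hS : ∀ t ∈ s, gridIndex b m (p t) ∈ S) {K : ℝ}
    (hK : (#S : ℝ) * 2 ^ m ≤ K * b ^ m) :
    volume s ≤ ENNReal.ofReal (K / δ * 2⁻¹ ^ m) := by
  have hsub : s ⊆ ⋃ Q ∈ S, {t ∈ s | gridIndex b m (p t) = Q} := fun t ht =>
    mem_biUnion (Finset.mem_coe.2 (hS t ht)) ⟨ht, rfl⟩
  calc volume s ≤ ∑ Q ∈ S, volume {t ∈ s | gridIndex b m (p t) = Q} :=
        (measure_mono hsub).trans (measure_biUnion_finset_le _ _)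
    _ ≤ ∑ _ ∈ S, ENNReal.ofReal (((b : ℝ) ^ m)⁻¹ / δ) :=
        Finset.sum_le_sum fun _ _ => h.volume_gridIndex_eq_le hb hδ m _
    _ = ENNReal.ofReal (#S * (((b : ℝ) ^ m)⁻¹ / δ)) := by
        rw [Finset.sum_const, nsmul_eq_mul, ENNReal.ofReal_mul (by positivity),
          ENNReal.ofReal_natCast]
    _ ≤ ENNReal.ofReal (K / δ * 2⁻¹ ^ m) := by
        refine ENNReal.ofReal_le_ofReal ?_
        rw [inv_pow]
        field_simp
        linarith

lemma measurableSet_setOf_frequently_mem {Y : Type*} [MeasurableSpace Y] {B : ℕ → Set Y}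
    (hB : ∀ m, MeasurableSet (B m)) : MeasurableSet {y | ∃ᶠ m in atTop, y ∈ B m} := by
  have hlimsup : {y | ∃ᶠ m in atTop, y ∈ B m} = limsup B atTop := by
    ext y; simp [mem_limsup_iff_frequently_mem]
  exact hlimsup ▸ MeasurableSet.measurableSet_limsup hB

/- Borel-Cantelli: within one unit cube, a steep path spends time `O(2 ^ (-m))` in the cubes of
generation `m`. -/
open scoped Finset in
lemma axisNull_frequently_gridIndex_mem [Finite ι] (hb : 0 < b) {K : ℝ} {ℬ : ℕ → Set (ι → ℤ)}
    (hℬ : ∀ m v, ∀ S : Finset (ι → ℤ), (∀ Q ∈ S, Q ∈ ℬ m ∧ ancestor b m Q = v) →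
      IsSteepFamily b i m S → (#S : ℝ) * 2 ^ m ≤ K * b ^ m) (hfin : ∀ m, (ℬ m).Finite) :
    AxisNull (b : ℝ)⁻¹ i {y | ∃ᶠ m in atTop, gridIndex b m y ∈ ℬ m} := by
  classical
  intro p s δ hδ hsteep
  let F : (ι → ℤ) → ℕ → Set ℝ := fun v m =>
    {t | t ∈ s ∧ gridIndex b 0 (p t) = v ∧ gridIndex b m (p t) ∈ ℬ m}
  have hF : ∀ v m, volume (F v m) ≤ ENNReal.ofReal (K / δ * 2⁻¹ ^ m) := by
    intro v m
    let S : Finset (ι → ℤ) := {Q ∈ (hfin m).toFinset | ∃ t ∈ F v m, gridIndex b m (p t) = Q}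
    have hFsteep : IsSteepOn (b : ℝ)⁻¹ δ i p (F v m) := hsteep.mono fun t ht => ht.1
    have hS : ∀ Q ∈ S, ∃ t ∈ F v m, gridIndex b m (p t) = Q := fun Q hQ =>
      (Finset.mem_filter.1 hQ).2
    refine hFsteep.volume_le_of_finset hb hδ
      (fun t ht => Finset.mem_filter.2 ⟨(hfin m).mem_toFinset.2 ht.2.2, t, ht, rfl⟩)
      (hℬ m v S (fun Q hQ => ?_) (hFsteep.isSteepFamily hb hS))
    obtain ⟨t, ht, rfl⟩ := hS Q hQ
    refine ⟨ht.2.2, ?_⟩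
    have hroot := ancestor_gridIndex hb 0 m (p t)
    rw [zero_add] at hroot
    rw [hroot, ht.2.1]
  have hlim : ∀ v, volume {t | ∃ᶠ m in atTop, t ∈ F v m} = 0 := fun v =>
    measure_setOfPred_frequently_eq_zero (ne_top_of_le_ne_top
      ((summable_geometric_of_lt_one (by norm_num) (by norm_num)).mul_left _).tsum_ofReal_ne_top
      (ENNReal.tsum_le_tsum (hF v)))
  refine measure_mono_null (fun t ht => ?_) (measure_iUnion_null hlim)
  exact mem_iUnion.2 ⟨gridIndex b 0 (p t), ht.2.mono fun m hm => ⟨ht.1, rfl, hm⟩⟩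

lemma exists_axisNull_cover [Fintype ι] {s : ℝ} (hs : 0 < s) (hsι : s < Fintype.card ι) :
    ∃ κ > 0, ∀ N : Set (ι → ℝ), μH[s] N = 0 → ∃ A : ι → Set (ι → ℝ),
      (∀ i, MeasurableSet (A i)) ∧ N ⊆ ⋃ i, A i ∧ ∀ i, AxisNull κ i (A i) := by
  classical
  have : Nonempty ι := Fintype.card_pos_iff.1 (by exact_mod_cast hs.trans hsι)
  obtain ⟨b, hb, hcol⟩ := exists_steep_colouring hsι
  have hb1 : (1 : ℝ) ≤ b := by exact_mod_cast one_le_two.trans hb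
  have hK : 1 ≤ 3 ^ Fintype.card ι * (b : ℝ) ^ s :=
    one_le_mul_of_one_le_of_one_le (one_le_pow₀ (by norm_num)) (Real.one_le_rpow hb1 hs.le)
  refine ⟨(b : ℝ)⁻¹, by positivity, fun N hN => ?_⟩
  obtain ⟨𝒬, h𝒬, hcov⟩ := exists_grid_cover hb hs hN
  choose col hcol using fun m => hcol m (𝒬 m) _ hK (h𝒬 m)
  let ℬ : ι → ℕ → Set (ι → ℤ) := fun i m => {Q | Q ∈ 𝒬 m ∧ col m Q = i}
  have hfin : ∀ i m, (ℬ i m).Finite := fun i m => (𝒬 m).finite_toSet.subset fun Q hQ => hQ.1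
  refine ⟨fun i => {y | ∃ᶠ m in atTop, gridIndex b m y ∈ ℬ i m}, fun i => ?_, fun y hy => ?_,
    fun i => ?_⟩
  · exact measurableSet_setOf_frequently_mem fun m =>
      measurable_gridIndex b m (hfin i m).measurableSet
  · refine mem_iUnion.2 ?_
    by_contra! hcon
    simp only [mem_ofPred_eq, not_frequently] at hcon
    refine hcov y hy ?_
    filter_upwards [eventually_all.2 hcon] with m hm hy𝒬
    exact hm _ ⟨hy𝒬, rfl⟩
  · exact axisNull_frequently_gridIndex_mem (by omega) (fun m v S hS hsteep =>
      hcol m i v S (fun Q hQ => (hS Q hQ).1.1) (fun Q hQ => ⟨(hS Q hQ).1.2, (hS Q hQ).2⟩) hsteep)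
      (hfin i)

end Steep

section AxisCone

variable {ι : Type*} {κ : ℝ} {i : ι}

/-- The open double cone `{y | |y l| < κ |y i| for all l ≠ i}` around the `i`-th coordinate axis,
without its apex. -/
def axisCone (κ : ℝ) (i : ι) : Set (ι → ℝ) :=
  {y | 0 < |y i| ∧ ∀ l, l ≠ i → |y l| < κ * |y i|}

lemma isOpen_axisCone [Finite ι] (κ : ℝ) (i : ι) : IsOpen (axisCone κ i) := by
  have hinter : axisCone κ i = {y | 0 < |y i|} ∩ ⋂ l, {y | l ≠ i → |y l| < κ * |y i|} := by
    ext y; simp [axisCone]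
  rw [hinter]
  refine (isOpen_lt continuous_const (continuous_apply i).abs).inter
    (isOpen_iInter_of_finite fun l => ?_)
  by_cases hl : l = i
  · simp [hl]
  · simpa [hl] using isOpen_lt (continuous_apply l).abs
      (continuous_const.mul (continuous_apply i).abs)

lemma smul_mem_axisCone {y : ι → ℝ} {c : ℝ} (hc : c ≠ 0) :
    c • y ∈ axisCone κ i ↔ y ∈ axisCone κ i := by
  have hc_pos : 0 < |c| := abs_pos.2 hc
  simp only [axisCone, mem_ofPred_eq, Pi.smul_apply, smul_eq_mul, abs_mul, mul_left_comm κ,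
    mul_lt_mul_iff_right₀ hc_pos, mul_pos_iff_of_pos_left hc_pos]

lemma single_one_mem_axisCone [DecidableEq ι] (hκ : 0 < κ) (i : ι) :
    Pi.single i 1 ∈ axisCone κ i :=
  ⟨by simp, fun l hl => by simp [hl, hκ]⟩

variable {p : ℝ → ι → ℝ} {s : Set ℝ} {t : ℝ}

lemma abs_sub_apply_eq_mul_abs_slope (p : ℝ → ι → ℝ) (t u : ℝ) (l : ι) :
    |p t l - p u l| = |t - u| * |slope p t u l| := by
  rw [abs_sub_comm, abs_sub_comm t u, ← abs_mul, ← smul_eq_mul, ← Pi.smul_apply,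
    sub_smul_slope, vsub_eq_sub, Pi.sub_apply]

lemma exists_pos_forall_steep_of_hasDerivWithinAt [Finite ι] {v : ι → ℝ}
    (hp : HasDerivWithinAt p v s t) (hv : v ∈ axisCone κ i) :
    ∃ δ > 0, ∀ u ∈ s, |t - u| < δ → δ * |t - u| ≤ |p t i - p u i| ∧
      ∀ l, l ≠ i → |p t l - p u l| ≤ κ * |p t i - p u i| := by
  have := Fintype.ofFinite ι
  have hnhds : ∀ᶠ y in 𝓝 v, y ∈ axisCone κ i ∧ |v i| / 2 < |y i| :=
    ((isOpen_axisCone κ i).eventually_mem hv).and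
      ((continuous_apply i).abs.continuousAt.eventually_const_lt (half_lt_self hv.1))
  have hslope := (hasDerivWithinAt_iff_tendsto_slope.1 hp).eventually hnhds
  rw [eventually_nhdsWithin_iff, Metric.eventually_nhds_iff] at hslope
  obtain ⟨ε, hε, hslope⟩ := hslope
  refine ⟨min ε (|v i| / 2), lt_min hε (half_pos hv.1), fun u hu htu => ?_⟩
  rcases eq_or_ne u t with rfl | hne
  · simp
  obtain ⟨hcone, hspeed⟩ := hslope (y := u)
    (by rw [dist_comm, Real.dist_eq]; exact htu.trans_le (min_le_left _ _)) ⟨hu, hne⟩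
  simp only [abs_sub_apply_eq_mul_abs_slope p t u]
  refine ⟨?_, fun l hl => ?_⟩
  · rw [mul_comm]
    gcongr
    exact (min_le_right _ _).trans hspeed.le
  · rw [mul_left_comm]
    gcongr
    exact (hcone.2 l hl).le

/- A velocity in the cone persists along short chords, so that countably many sets on which `p` is
steep cover the exceptional times. -/
lemma AxisNull.ae_notMem_axisCone [Finite ι] {A : Set (ι → ℝ)} (hA : AxisNull κ i A)
    (hs : MeasurableSet s) (p : ℝ → ι → ℝ) :
    ∀ᵐ t ∂volume.restrict s, p t ∈ A → ∀ v, HasDerivWithinAt p v s t → v ∉ axisCone κ i := by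
  rw [ae_restrict_iff' hs]
  let Z : ℕ → ℤ → Set ℝ := fun k q => {t | t ∈ s ∧ ⌊((k : ℝ) + 1) * t⌋ = q ∧
    ∀ u ∈ s, |t - u| < 1 / ((k : ℝ) + 1) →
      1 / ((k : ℝ) + 1) * |t - u| ≤ |p t i - p u i| ∧
        ∀ l, l ≠ i → |p t l - p u l| ≤ κ * |p t i - p u i|}
  have hZ : ∀ k q, volume (Z k q ∩ p ⁻¹' A) = 0 := by
    intro k q
    refine hA p (Z k q) (1 / ((k : ℝ) + 1)) Nat.one_div_pos_of_nat fun t ht u hu => ?_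
    have hfloor := Int.abs_sub_lt_one_of_floor_eq_floor (ht.2.1.trans hu.2.1.symm)
    rw [← mul_sub, abs_mul, abs_of_pos (by positivity)] at hfloor
    exact ht.2.2 u hu.1 (by rwa [lt_div_iff₀ (by positivity), mul_comm])
  refine measure_mono_null (fun t ht => ?_)
    (measure_iUnion_null fun k => measure_iUnion_null fun q => hZ k q)
  simp only [mem_compl_iff, mem_ofPred_eq] at ht
  push Not at ht
  obtain ⟨hts, htA, v, hv, hvcone⟩ := ht
  obtain ⟨δ, hδ, hsteep⟩ := exists_pos_forall_steep_of_hasDerivWithinAt hv hvcone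
  obtain ⟨k, hk⟩ := exists_nat_one_div_lt hδ
  refine mem_iUnion₂.2 ⟨k, ⌊((k : ℝ) + 1) * t⌋, ⟨hts, rfl, fun u hu htu => ?_⟩, htA⟩
  obtain ⟨hspeed, hchord⟩ := hsteep u hu (htu.trans hk)
  exact ⟨le_trans (by gcongr) hspeed, hchord⟩

end AxisCone

/-! ### The pointwise Lipschitz constant -/

section LipAt

variable {Y : Type*} [MetricSpace Y] {f g : Y → ℝ} {K K' M : ℝ≥0} {x : Y} {a r ε : ℝ}

lemma sSup_lipQuotient_nonneg (f : Y → ℝ) (x : Y) (hr : 0 < r) :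
    0 ≤ sSup ((fun y => |f y - f x| / r) '' closedBall x r) := by
  refine Real.sSup_nonneg ?_
  rintro _ ⟨y, -, rfl⟩
  positivity

lemma mem_upperBounds_lipQuotient (hε : 0 ≤ ε) (hr : 0 < r)
    (h : ∀ y, dist y x ≤ r → |f y - f x| ≤ ε * dist y x) :
    ε ∈ upperBounds ((fun y => |f y - f x| / r) '' closedBall x r) := by
  rintro _ ⟨y, hy, rfl⟩
  rw [mem_closedBall] at hy
  exact (div_le_iff₀ hr).2 ((h y hy).trans (mul_le_mul_of_nonneg_left hy hε))

lemma isBoundedUnder_lipQuotient (hf : LipschitzWith K f) (x : Y) :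
    (𝓝[>] (0 : ℝ)).IsBoundedUnder (· ≤ ·)
      fun r => sSup ((fun y => |f y - f x| / r) '' closedBall x r) := by
  refine isBoundedUnder_of_eventually_le (a := (K : ℝ)) ?_
  filter_upwards [eventually_mem_nhdsWithin] with r hr
  exact Real.sSup_le (mem_upperBounds_lipQuotient K.2 hr fun y _ => hf.dist_le_mul y x) K.2

lemma lipAt_nonneg (hf : LipschitzWith K f) (x : Y) : 0 ≤ lipAt f x :=
  le_limsup_of_frequently_le
    (Eventually.frequently (f := 𝓝[>] (0 : ℝ))
      (eventually_mem_nhdsWithin.mono fun _ hr => sSup_lipQuotient_nonneg f x hr))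
    (isBoundedUnder_lipQuotient hf x)

lemma lipAt_le_of_eventually (hε : 0 ≤ ε) (h : ∀ᶠ y in 𝓝 x, |f y - f x| ≤ ε * dist y x) :
    lipAt f x ≤ ε := by
  obtain ⟨δ, hδ, hball⟩ := Metric.eventually_nhds_iff.1 h
  refine limsup_le_of_le (isCoboundedUnder_le_of_eventually_le _
    (eventually_mem_nhdsWithin.mono fun _ hr => sSup_lipQuotient_nonneg f x hr)) ?_
  filter_upwards [Ioo_mem_nhdsGT hδ] with r hr
  exact Real.sSup_le
    (mem_upperBounds_lipQuotient hε hr.1 fun y hy => hball (hy.trans_lt hr.2)) hε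

lemma eventually_le_of_lipAt_lt (hf : LipschitzWith K f) (h : lipAt f x < ε) :
    ∀ᶠ y in 𝓝 x, |f y - f x| ≤ ε * dist y x := by
  obtain ⟨δ, hδ, hlt⟩ := mem_nhdsGT_iff_exists_Ioo_subset.1
    (eventually_lt_of_limsup_lt h (isBoundedUnder_lipQuotient hf x))
  refine Metric.eventually_nhds_iff.2 ⟨δ, hδ, fun y hy => ?_⟩
  rcases (dist_nonneg (x := y) (y := x)).eq_or_lt with hyx | hyx
  · simp [dist_eq_zero.1 hyx.symm]
  rw [← div_le_iff₀ hyx]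
  have hbdd : BddAbove ((fun z => |f z - f x| / dist y x) '' closedBall x (dist y x)) :=
    ⟨K, mem_upperBounds_lipQuotient K.2 hyx fun z _ => hf.dist_le_mul z x⟩
  have hsup : sSup ((fun z => |f z - f x| / dist y x) '' closedBall x (dist y x)) < ε :=
    hlt ⟨hyx, hy⟩
  exact (le_csSup hbdd ⟨y, mem_closedBall.2 le_rfl, rfl⟩).trans hsup.le

lemma lipAt_le_iff (hf : LipschitzWith K f) (ha : 0 ≤ a) :
    lipAt f x ≤ a ↔ ∀ ε > a, ∀ᶠ y in 𝓝 x, |f y - f x| ≤ ε * dist y x :=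
  ⟨fun h _ hε => eventually_le_of_lipAt_lt hf (h.trans_lt hε), fun h =>
    le_of_forall_gt_imp_ge_of_dense fun ε hε => lipAt_le_of_eventually (ha.trans hε.le) (h ε hε)⟩

lemma lipAt_le_zero_iff (hf : LipschitzWith K f) :
    lipAt f x ≤ 0 ↔ (fun y => f y - f x) =o[𝓝 x] fun y => dist y x := by
  rw [lipAt_le_iff hf le_rfl, Asymptotics.isLittleO_iff]
  simp only [Real.norm_eq_abs, abs_of_nonneg dist_nonneg]

lemma lipAt_le_add (hf : LipschitzWith K f) (hg : LipschitzWith K' g)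
    (hfg : LipschitzWith M (f - g)) (x : Y) : lipAt f x ≤ lipAt g x + M := by
  have hg0 := lipAt_nonneg hg x
  rw [lipAt_le_iff hf (by positivity)]
  intro ε hε
  filter_upwards [eventually_le_of_lipAt_lt hg (lt_sub_iff_add_lt.2 hε)] with y hy
  have hfgy : |(f - g) y - (f - g) x| ≤ M * dist y x := hfg.dist_le_mul y x
  calc |f y - f x| = |(g y - g x) + ((f - g) y - (f - g) x)| := by
        congr 1
        simp only [Pi.sub_apply]
        ring
    _ ≤ (ε - M) * dist y x + M * dist y x := (abs_add_le _ _).trans (add_le_add hy hfgy)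
    _ = ε * dist y x := by ring

lemma isClosed_setOf_forall_abs_sub_le_mul_dist (hf : Continuous f) (ε δ : ℝ) :
    IsClosed {x | ∀ y, dist y x < δ → |f y - f x| ≤ ε * dist y x} := by
  simp only [ofPred_forall, imp_iff_not_or, not_lt, ofPred_or]
  refine isClosed_iInter fun y => (isClosed_le continuous_const (by fun_prop)).union ?_
  exact isClosed_le (by fun_prop) (by fun_prop)

lemma lipAt_le_iff_exists_nat (hf : LipschitzWith K f) (ha : 0 ≤ a) :
    lipAt f x ≤ a ↔ ∀ k : ℕ, ∃ m : ℕ, ∀ y, dist y x < 1 / ((m : ℝ) + 1) →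
      |f y - f x| ≤ (a + 1 / ((k : ℝ) + 1)) * dist y x := by
  rw [lipAt_le_iff hf ha]
  refine ⟨fun h k => ?_, fun h ε hε => ?_⟩
  · obtain ⟨δ, hδ, hball⟩ := Metric.eventually_nhds_iff.1
      (h (a + 1 / ((k : ℝ) + 1)) (lt_add_of_pos_right _ Nat.one_div_pos_of_nat))
    obtain ⟨m, hm⟩ := exists_nat_one_div_lt hδ
    exact ⟨m, fun y hy => hball (hy.trans hm)⟩
  · obtain ⟨k, hk⟩ := exists_nat_one_div_lt (sub_pos.2 hε)
    obtain ⟨m, hm⟩ := h k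
    refine Metric.eventually_nhds_iff.2 ⟨_, Nat.one_div_pos_of_nat (n := m), fun y hy => ?_⟩
    refine (hm y hy).trans ?_
    gcongr
    linarith

lemma measurable_lipAt [MeasurableSpace Y] [BorelSpace Y] (hf : LipschitzWith K f) :
    Measurable (lipAt f) := by
  refine measurable_of_Iic fun a => ?_
  rcases lt_or_ge a 0 with ha | ha
  · have hempty : lipAt f ⁻¹' Iic a = ∅ := eq_empty_of_forall_notMem fun x hx =>
      (lipAt_nonneg hf x).not_gt (hx.trans_lt ha)
    rw [hempty]
    exact MeasurableSet.empty
  · have hinter : lipAt f ⁻¹' Iic a = ⋂ k : ℕ, ⋃ m : ℕ, {x | ∀ y, dist y x < 1 / ((m : ℝ) + 1) →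
        |f y - f x| ≤ (a + 1 / ((k : ℝ) + 1)) * dist y x} := by
      ext x
      simp only [mem_preimage, mem_Iic, lipAt_le_iff_exists_nat hf ha, mem_iInter, mem_iUnion,
        mem_ofPred_eq]
    rw [hinter]
    exact MeasurableSet.iInter fun k => MeasurableSet.iUnion fun m =>
      (isClosed_setOf_forall_abs_sub_le_mul_dist hf.continuous _ _).measurableSet

end LipAt

section IndSet

variable {Y : Type*} [MetricSpace Y] {n : ℕ} {φ : Y → E n} {L : ℝ≥0} {x : Y}

lemma lipschitzWith_inner (hφ : LipschitzWith L φ) (w : E n) :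
    LipschitzWith (L * ‖w‖₊) fun y => ⟪φ y, w⟫ := by
  refine LipschitzWith.of_dist_le_mul fun y z => ?_
  rw [Real.dist_eq, ← inner_sub_left]
  refine (abs_real_inner_le_norm _ _).trans ?_
  rw [← dist_eq_norm, NNReal.coe_mul, coe_nnnorm, mul_right_comm]
  gcongr
  exact hφ.dist_le_mul y z

lemma continuous_lipAt_inner (hφ : LipschitzWith L φ) (x : Y) :
    Continuous fun w : E n => lipAt (fun y => ⟪φ y, w⟫) x := by
  refine (LipschitzWith.of_le_add_mul L fun w w' => ?_).continuous
  have hsub : LipschitzWith (L * ‖w - w'‖₊) ((fun y => ⟪φ y, w⟫) - fun y => ⟪φ y, w'⟫) := by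
    convert lipschitzWith_inner hφ (w - w') using 1
    funext y
    simp only [Pi.sub_apply, inner_sub_right]
  refine (lipAt_le_add (lipschitzWith_inner hφ w) (lipschitzWith_inner hφ w') hsub x).trans_eq ?_
  rw [dist_eq_norm, NNReal.coe_mul, coe_nnnorm]

lemma indSet_eq_univ_of_dim_zero (φ : Y → E 0) : indSet φ = univ :=
  eq_univ_of_forall fun _ w hw => by simp [Subsingleton.elim w 0] at hw

lemma mem_indSet_iff_exists_forall_le (hφ : LipschitzWith L φ) :
    x ∈ indSet φ ↔ ∃ ε > 0, ∀ w : E n, ‖w‖ = 1 → ε ≤ lipAt (fun y => ⟪φ y, w⟫) x := by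
  refine ⟨fun hx => ?_, fun ⟨ε, hε, h⟩ w hw => hε.trans_le (h w hw)⟩
  rcases (sphere (0 : E n) 1).eq_empty_or_nonempty with hempty | hne
  · exact ⟨1, one_pos, fun w hw => absurd (mem_sphere_zero_iff_norm.2 hw) (hempty ▸ notMem_empty w)⟩
  obtain ⟨w₀, hw₀, hmin⟩ := (isCompact_sphere (0 : E n) 1).exists_isMinOn hne
    (continuous_lipAt_inner hφ x).continuousOn
  exact ⟨_, hx w₀ (mem_sphere_zero_iff_norm.1 hw₀), fun w hw =>
    hmin (mem_sphere_zero_iff_norm.2 hw)⟩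

lemma mem_indSet_iff_exists_nat_dense (hφ : LipschitzWith L φ) {D : Set (sphere (0 : E n) 1)}
    (hD : Dense D) :
    x ∈ indSet φ ↔ ∃ k : ℕ, ∀ w ∈ D, 1 / ((k : ℝ) + 1) ≤ lipAt (fun y => ⟪φ y, (w : E n)⟫) x := by
  rw [mem_indSet_iff_exists_forall_le hφ]
  refine ⟨fun ⟨ε, hε, h⟩ => ?_, fun ⟨k, hk⟩ =>
    ⟨1 / ((k : ℝ) + 1), Nat.one_div_pos_of_nat, fun w hw => ?_⟩⟩
  · obtain ⟨k, hk⟩ := exists_nat_one_div_lt hε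
    exact ⟨k, fun w _ => hk.le.trans (h w (mem_sphere_zero_iff_norm.1 w.2))⟩
  · refine hD.induction (P := fun w : sphere (0 : E n) 1 =>
      1 / ((k : ℝ) + 1) ≤ lipAt (fun y => ⟪φ y, (w : E n)⟫) x) hk ?_
      ⟨w, mem_sphere_zero_iff_norm.2 hw⟩
    exact isClosed_le continuous_const
      ((continuous_lipAt_inner hφ x).comp continuous_subtype_val)

lemma measurableSet_indSet [MeasurableSpace Y] [BorelSpace Y] (hφ : LipschitzWith L φ) :
    MeasurableSet (indSet φ) := by
  obtain ⟨D, hDc, hD⟩ := TopologicalSpace.exists_countable_dense (sphere (0 : E n) 1)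
  have hunion : indSet φ = ⋃ k : ℕ, ⋂ w ∈ D, {x | 1 / ((k : ℝ) + 1) ≤
      lipAt (fun y => ⟪φ y, (w : E n)⟫) x} := by
    ext x
    simp only [mem_indSet_iff_exists_nat_dense hφ hD, mem_iUnion, mem_iInter, mem_ofPred_eq]
  rw [hunion]
  exact MeasurableSet.iUnion fun k => MeasurableSet.biInter hDc fun w _ =>
    measurableSet_le measurable_const (measurable_lipAt (lipschitzWith_inner hφ _))

end IndSet

/-! ### Velocities of curves and upper gradients -/

/-- For almost every time that a curve spends in `A`, its velocity seen through `φ` is not in `O`.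
No regularity of the curve is assumed. -/
def AvoidsVelocity {Y V : Type*} [NormedAddCommGroup V] [NormedSpace ℝ V] (φ : Y → V) (O : Set V)
    (A : Set Y) : Prop :=
  ∀ γ : ℝ → Y, ∀ᵐ t ∂volume.restrict (Icc (0 : ℝ) 1), γ t ∈ A →
    ∀ v, HasDerivWithinAt (φ ∘ γ) v (Icc 0 1) t → v ∉ O

section AvoidsVelocity

variable {Y V ι α : Type*} [NormedAddCommGroup V] [NormedSpace ℝ V] {φ : Y → V}

lemma AxisNull.avoidsVelocity [Finite ι] {κ : ℝ} {i : ι} {A : Set (ι → ℝ)}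
    (hA : AxisNull κ i A) (T : V →L[ℝ] ι → ℝ) :
    AvoidsVelocity φ (T ⁻¹' axisCone κ i) (T ∘ φ ⁻¹' A) := by
  have := Fintype.ofFinite ι
  intro γ
  filter_upwards [hA.ae_notMem_axisCone measurableSet_Icc (T ∘ φ ∘ γ)] with t ht htA v hv
  exact ht htA (T v) (T.hasFDerivAt.comp_hasDerivWithinAt t hv)

lemma AvoidsVelocity.mono {O O' : Set V} {A : Set Y} (h : AvoidsVelocity φ O A) (hO : O' ⊆ O) :
    AvoidsVelocity φ O' A := fun γ => by
  filter_upwards [h γ] with t ht htA v hv hvO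
  exact ht htA v hv (hO hvO)

lemma avoidsVelocity_biInter {O : α → Set V} {A : α → Set Y} {F : Set α} (hF : F.Countable)
    (h : ∀ p ∈ F, AvoidsVelocity φ (O p) (A p)) :
    AvoidsVelocity φ (⋃ p ∈ F, O p) (⋂ p ∈ F, A p) := fun γ => by
  filter_upwards [(ae_ball_iff hF).2 fun p hp => h p hp γ] with t ht htA v hv hvO
  obtain ⟨p, hp, hvp⟩ := mem_iUnion₂.1 hvO
  exact ht p hp (mem_iInter₂.1 htA p hp) v hv hvp

end AvoidsVelocity

section UpperGradient

variable {Y : Type*} [MetricSpace Y] [MeasurableSpace Y] [BorelSpace Y]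

lemma isUpperGradient_of_ae_abs_deriv_le {f ρ : Y → ℝ} {K : ℝ≥0} {B : ℝ}
    (hf : LipschitzWith K f) (hρ : Measurable ρ) (hB : ∀ x, |ρ x| ≤ B)
    (h : ∀ γ : ℝ → Y, LipschitzOnWith 1 γ (Icc 0 1) →
      ∀ᵐ t ∂volume.restrict (Icc (0 : ℝ) 1), |deriv (f ∘ γ) t| ≤ ρ (γ t)) :
    IsUpperGradient f ρ := by
  intro γ hγ
  have hfγ : LipschitzOnWith (K * 1) (f ∘ γ) (uIcc 0 1) := by
    rw [uIcc_of_le zero_le_one]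
    exact hf.lipschitzOnWith.comp hγ (mapsTo_univ _ _)
  have hρint : Integrable (fun t => ρ (γ t)) (volume.restrict (Icc (0 : ℝ) 1)) :=
    Integrable.of_bound (hρ.comp_aemeasurable
      (hγ.continuousOn.aemeasurable measurableSet_Icc)).aestronglyMeasurable B
      (Eventually.of_forall fun t => hB (γ t))
  calc |f (γ 1) - f (γ 0)| = ‖∫ t in Icc (0 : ℝ) 1, deriv (f ∘ γ) t‖ := by
        rw [integral_Icc_eq_integral_Ioc, ← intervalIntegral.integral_of_le zero_le_one,
          hfγ.absolutelyContinuousOnInterval.integral_deriv_eq_sub, Real.norm_eq_abs,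
          Function.comp_apply, Function.comp_apply]
    _ ≤ ∫ t in Icc (0 : ℝ) 1, ρ (γ t) := norm_integral_le_of_norm_le hρint (h γ hγ)

lemma AvoidsVelocity.isUpperGradient_inner {n : ℕ} {φ : Y → E n} {L : ℝ≥0}
    (hφ : LipschitzWith L φ) {P : Set Y} [DecidablePred (· ∈ P)]
    (hP : MeasurableSet P) {w : E n} (hw : ‖w‖ = 1) {θ : ℝ} (hθ : 0 ≤ θ)
    (h : AvoidsVelocity φ (cone w θ \ {0}) P) :
    IsUpperGradient (fun x => ⟪φ x, w⟫) (P.piecewise (fun _ => θ * L) fun _ => L) := by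
  refine isUpperGradient_of_ae_abs_deriv_le (lipschitzWith_inner hφ w)
    (measurable_const.piecewise hP measurable_const) (B := max (θ * L) L) (fun x => ?_)
    fun γ hγ => ?_
  · by_cases hx : x ∈ P <;> simp [hx, abs_of_nonneg hθ]
  have hφγ : LipschitzOnWith L (φ ∘ γ) (Icc 0 1) := by
    simpa using hφ.lipschitzOnWith.comp hγ (mapsTo_univ _ _)
  have hIoo : ∀ᵐ t ∂volume.restrict (Icc (0 : ℝ) 1), t ∈ Ioo (0 : ℝ) 1 := by
    rw [← restrict_Ioo_eq_restrict_Icc]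
    exact ae_restrict_mem measurableSet_Ioo
  filter_upwards [hIoo, hφγ.ae_differentiableWithinAt_real measurableSet_Icc, h γ]
    with t ht hdiff havoid
  have hnhds : Icc (0 : ℝ) 1 ∈ 𝓝 t := Icc_mem_nhds ht.1 ht.2
  have hv := hdiff.hasDerivWithinAt
  set v := derivWithin (φ ∘ γ) (Icc 0 1) t
  have hvL : ‖v‖ ≤ L := (hv.hasDerivAt hnhds).le_of_lipschitzOn hnhds hφγ
  have hderiv : deriv ((fun x => ⟪φ x, w⟫) ∘ γ) t = ⟪v, w⟫ := by
    simpa [Function.comp_def] using ((hv.hasDerivAt hnhds).inner ℝ (hasDerivAt_const t w)).deriv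
  rw [hderiv]
  by_cases htP : γ t ∈ P
  · rw [piecewise_eq_of_mem _ _ _ htP]
    refine le_trans ?_ (mul_le_mul_of_nonneg_left hvL hθ)
    by_contra! hcone
    exact havoid htP v hv ⟨hcone.le, fun hv0 : v = 0 => by simp [hv0] at hcone⟩
  · rw [piecewise_eq_of_notMem _ _ _ htP]
    exact (abs_real_inner_le_norm v w).trans (by rwa [hw, mul_one])

end UpperGradient

/-! ### Independence fails above the Hausdorff dimension -/

lemma exists_forall_mem_axisCone_of_denseRange {V ι α : Type*} [NormedAddCommGroup V]
    [NormedSpace ℝ V] [FiniteDimensional ℝ V] [Finite ι] {T : α → V →L[ℝ] ι → ℝ}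
    (hT : DenseRange T) {κ : ℝ} (hκ : 0 < κ) {v : ι → V} (hv : LinearIndependent ℝ v) :
    ∃ j, ∀ i, T j (v i) ∈ axisCone κ i := by
  classical
  have := Fintype.ofFinite ι
  obtain ⟨g, hg⟩ := (Fintype.linearCombination ℝ v).exists_leftInverse_of_injective
    (LinearMap.ker_eq_bot.2 (linearIndependent_iff_injective_fintypeLinearCombination.1 hv))
  have hgv : ∀ i, LinearMap.toContinuousLinearMap g (v i) = Pi.single i 1 := fun i => by
    simpa [Fintype.linearCombination_apply_single] using LinearMap.congr_fun hg (Pi.single i 1)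
  have hopen : IsOpen {S : V →L[ℝ] ι → ℝ | ∀ i, S (v i) ∈ axisCone κ i} := by
    rw [ofPred_forall]
    exact isOpen_iInter_of_finite fun i =>
      (isOpen_axisCone κ i).preimage (ContinuousLinearMap.apply ℝ _ (v i)).continuous
  exact hT.exists_mem_open hopen ⟨LinearMap.toContinuousLinearMap g, fun i => by
    rw [hgv]; exact single_one_mem_axisCone hκ i⟩

/- The axis-null cover is applied to the images of `φ` under a dense sequence of linear maps: each
basis is almost carried to the standard basis by one of them. -/
lemma exists_avoidsVelocity_family {Y : Type*} [MetricSpace Y] [MeasurableSpace Y] [BorelSpace Y]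
    {n : ℕ} (hdim : dimH (univ : Set Y) < n) {φ : Y → E n} {L : ℝ≥0} (hφ : LipschitzWith L φ) :
    ∃ (A : ℕ × Fin n → Set Y) (O : ℕ × Fin n → Set (E n)),
      (∀ q, MeasurableSet (A q)) ∧ (∀ q, IsOpen (O q)) ∧
      (∀ q, ∀ c ≠ (0 : ℝ), ∀ v ∈ O q, c • v ∈ O q) ∧
      (∀ q, AvoidsVelocity φ (O q) (A q)) ∧
      ∀ x, ∀ v : Fin n → E n, LinearIndependent ℝ v → ∃ q, x ∈ A q ∧ ∃ i, v i ∈ O q := by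
  obtain ⟨s, hs, hsn⟩ := ENNReal.lt_iff_exists_nnreal_btwn.1 hdim
  obtain ⟨κ, hκ, hcover⟩ := exists_axisNull_cover (ι := Fin n)
    (NNReal.coe_pos.2 (ENNReal.coe_pos.1 (zero_le.trans_lt hs))) (by simpa using mod_cast hsn)
  let T : ℕ → E n →L[ℝ] (Fin n → ℝ) := TopologicalSpace.denseSeq _
  have hTφ : ∀ j, LipschitzWith (‖T j‖₊ * L) (T j ∘ φ) := fun j => (T j).lipschitz.comp hφ
  choose A hAm hAU hA using fun j =>
    hcover (range (T j ∘ φ)) (hausdorffMeasure_of_dimH_lt ((hTφ j).dimH_range_le.trans_lt hs))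
  refine ⟨fun q => T q.1 ∘ φ ⁻¹' A q.1 q.2, fun q => T q.1 ⁻¹' axisCone κ q.2,
    fun q => (hTφ q.1).continuous.measurable (hAm _ _),
    fun q => (isOpen_axisCone κ q.2).preimage (T q.1).continuous, fun q c hc v hv => ?_,
    fun q => (hA _ _).avoidsVelocity _, fun x v hv => ?_⟩
  · rwa [mem_preimage, map_smul, smul_mem_axisCone hc]
  · obtain ⟨j, hj⟩ := exists_forall_mem_axisCone_of_denseRange
      (TopologicalSpace.denseRange_denseSeq _) hκ hv
    obtain ⟨i, hi⟩ := mem_iUnion.1 (hAU j (mem_range_self x))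
    exact ⟨(j, i), hi, i, hj i⟩

lemma exists_unit_forall_mem_of_inner_ne_zero {n : ℕ} {O : Set (E n)}
    (hO : ∀ v : Fin n → E n, LinearIndependent ℝ v → ∃ i, v i ∈ O) :
    ∃ w : E n, ‖w‖ = 1 ∧ ∀ v, ⟪v, w⟫ ≠ 0 → v ∈ O := by
  have hspan : Submodule.span ℝ Oᶜ ≠ ⊤ := by
    intro htop
    obtain ⟨b, hbO, hspan, hli⟩ := exists_linearIndependent ℝ Oᶜ
    rw [htop] at hspan
    let B := Module.Basis.mk hli (by rw [Subtype.range_coe, hspan])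
    have hfin : Fintype b := FiniteDimensional.fintypeBasisIndex B
    have hcard : Fintype.card b = n := by
      rw [← Module.finrank_eq_card_basis B, finrank_euclideanSpace_fin]
    let f : Fin n ≃ b := (Fintype.equivFinOfCardEq hcard).symm
    obtain ⟨i, hi⟩ := hO (fun i => (f i : E n)) (hli.comp f f.injective)
    exact hbO (f i).2 hi
  obtain ⟨w, hw, hw0⟩ := Submodule.exists_mem_ne_zero_of_ne_bot
    (mt Submodule.orthogonal_eq_bot_iff.1 hspan)
  refine ⟨‖w‖⁻¹ • w, norm_smul_inv_norm hw0, fun v hv => ?_⟩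
  by_contra hvO
  refine hv ?_
  rw [inner_smul_right, Submodule.inner_right_of_mem_orthogonal (Submodule.subset_span hvO) hw,
    mul_zero]

lemma exists_finset_cone_subset_biUnion {n : ℕ} {α : Type*} {O : α → Set (E n)} {S : Set α}
    (hopen : ∀ q, IsOpen (O q)) (hsmul : ∀ q, ∀ c ≠ (0 : ℝ), ∀ v ∈ O q, c • v ∈ O q) {w : E n}
    (hcover : ∀ v, ⟪v, w⟫ ≠ 0 → v ∈ ⋃ q ∈ S, O q) {θ : ℝ} (hθ : 0 < θ) :
    ∃ F : Finset α, ↑F ⊆ S ∧ cone w θ \ {0} ⊆ ⋃ q ∈ (F : Set α), O q := by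
  have hcpt : IsCompact (sphere (0 : E n) 1 ∩ {v | θ ≤ |⟪v, w⟫|}) :=
    (isCompact_sphere _ _).inter_right (isClosed_le continuous_const (by fun_prop))
  obtain ⟨F, hFS, hFfin, hF⟩ := hcpt.elim_finite_subcover_image (fun q _ => hopen q)
    fun v hv => hcover v (abs_pos.1 (hθ.trans_le hv.2))
  refine ⟨hFfin.toFinset, by simpa using hFS, fun v ⟨hv, (hv0 : v ≠ 0)⟩ => ?_⟩
  have hvpos : 0 < ‖v‖ := norm_pos_iff.2 hv0
  obtain ⟨q, hq, hvq⟩ := mem_iUnion₂.1 (hF (a := ‖v‖⁻¹ • v)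
    ⟨mem_sphere_zero_iff_norm.2 (norm_smul_inv_norm hv0), by
      rw [mem_ofPred_eq, real_inner_smul_left, abs_mul, abs_inv, abs_norm, inv_mul_eq_div,
        le_div_iff₀ hvpos]
      exact hv⟩)
  refine mem_iUnion₂.2 ⟨q, by simpa using hq, ?_⟩
  simpa [smul_smul, hvpos.ne'] using hsmul q ‖v‖ hvpos.ne' _ hvq

/-- The pointwise Lipschitz constant of each Lipschitz function is at most `C` times each of its
Borel upper gradients, almost everywhere. The factor `C` may depend on the point. -/
def LipLeUpperGradients {Y : Type*} [MetricSpace Y] [MeasurableSpace Y] (μ : Measure Y)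
    (C : Y → ℝ) : Prop :=
  ∀ f : Y → ℝ, (∃ K, LipschitzWith K f) → ∀ ρ : Y → ℝ, Measurable ρ →
    IsUpperGradient f ρ → ∀ᵐ x ∂μ, lipAt f x ≤ C x * ρ x

section

variable {Y : Type*} [MetricSpace Y] [MeasurableSpace Y] [BorelSpace Y] {μ : Measure Y}
  {C : Y → ℝ} {n : ℕ} {φ : Y → E n} {L : ℝ≥0}

lemma LipLeUpperGradients.ae_lipAt_inner_le (h : LipLeUpperGradients μ C)
    (hφ : LipschitzWith L φ) {P : Set Y} (hP : MeasurableSet P) {w : E n} (hw : ‖w‖ = 1) {θ : ℝ}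
    (hθ : 0 ≤ θ) (havoid : AvoidsVelocity φ (cone w θ \ {0}) P) :
    ∀ᵐ x ∂μ, x ∈ P → lipAt (fun y => ⟪φ y, w⟫) x ≤ C x * (θ * L) := by
  classical
  filter_upwards [h _ ⟨_, lipschitzWith_inner hφ w⟩ _
    (measurable_const.piecewise hP measurable_const)
    (havoid.isUpperGradient_inner hφ hP hw hθ)] with x hx hxP
  rwa [piecewise_eq_of_mem _ _ _ hxP] at hx

/- At almost every `x`, the directions avoided at `x` contain the complement of a hyperplane `w⊥`.
By compactness, finitely many of the open sets `O q` cover each cone around `w`, which makes an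
upper gradient of `⟪φ, w⟫` arbitrarily small at `x`. -/
lemma LipLeUpperGradients.measure_indSet_eq_zero (h : LipLeUpperGradients μ C)
    (hdim : dimH (univ : Set Y) < n) (hφ : LipschitzWith L φ) : μ (indSet φ) = 0 := by
  obtain ⟨A, O, hAm, hopen, hsmul, havoid, hcover⟩ := exists_avoidsVelocity_family hdim hφ
  have hlip : ∀ᵐ x ∂μ, ∀ (F : Finset (ℕ × Fin n)) (k : ℕ),
      (∃ w, ‖w‖ = 1 ∧ cone w (1 / ((k : ℝ) + 1)) \ {0} ⊆ ⋃ q ∈ (F : Set (ℕ × Fin n)), O q) →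
      x ∈ ⋂ q ∈ (F : Set (ℕ × Fin n)), A q →
      ∃ w : E n, ‖w‖ = 1 ∧ lipAt (fun y => ⟪φ y, w⟫) x ≤ C x * (1 / ((k : ℝ) + 1) * L) := by
    refine ae_all_iff.2 fun F => ae_all_iff.2 fun k =>
      eventually_imp_distrib_left.2 fun ⟨w, hw, hsub⟩ => ?_
    filter_upwards [h.ae_lipAt_inner_le hφ (F.measurableSet_biInter fun q _ => hAm q) hw
      (by positivity) ((avoidsVelocity_biInter F.countable_toSet fun q _ => havoid q).mono hsub)]
      with x hx hxF
    exact ⟨w, hw, hx hxF⟩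
  refine measure_eq_zero_iff_ae_notMem.2 ?_
  filter_upwards [hlip] with x hx hxind
  obtain ⟨w, hw, hwO⟩ := exists_unit_forall_mem_of_inner_ne_zero
    (O := ⋃ q ∈ {q | x ∈ A q}, O q) fun v hv => by
      obtain ⟨q, hxq, i, hi⟩ := hcover x v hv
      exact ⟨i, mem_biUnion hxq hi⟩
  obtain ⟨ε, hε, hle⟩ := (mem_indSet_iff_exists_forall_le hφ).1 hxind
  have hsmall : ∀ k : ℕ, ε ≤ C x * (1 / ((k : ℝ) + 1) * L) := fun k => by
    obtain ⟨F, hFA, hF⟩ := exists_finset_cone_subset_biUnion hopen hsmul hwO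
      (Nat.one_div_pos_of_nat (α := ℝ) (n := k))
    obtain ⟨u, hu, hlipu⟩ := hx F k ⟨w, hw, hF⟩ (mem_iInter₂.2 fun q hq => hFA hq)
    exact (hle u hu).trans hlipu
  have hlim : Tendsto (fun k : ℕ => C x * (1 / ((k : ℝ) + 1) * L)) atTop (𝓝 (C x * (0 * L))) :=
    (tendsto_one_div_add_atTop_nhds_zero_nat.mul_const _).const_mul _
  exact hε.not_ge (by simpa using ge_of_tendsto' hlim hsmall)

end

/-! ### Differentiability where independence cannot be improved -/

section Differentiability

variable {Y : Type*} [MetricSpace Y] {n : ℕ} {f : Y → ℝ} {φ : Y → E n} {K L : ℝ≥0} {x : Y}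

lemma tendsto_abs_div_dist_iff {u : Y → ℝ} (hu : u x = 0) :
    Tendsto (fun y => |u y| / dist y x) (𝓝[≠] x) (𝓝 0) ↔ u =o[𝓝 x] fun y => dist y x := by
  have hpunctured : u =o[𝓝 x] (fun y => dist y x) ↔ u =o[𝓝[≠] x] (fun y => dist y x) := by
    rw [← Asymptotics.isLittleO_insert (s := {x}ᶜ) hu, insert_eq, union_compl_self, nhdsWithin_univ]
  rw [hpunctured, ← Asymptotics.isLittleO_abs_left, Asymptotics.isLittleO_iff_tendsto']
  filter_upwards [eventually_mem_nhdsWithin] with y hy hdist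
  exact absurd (dist_eq_zero.1 hdist) hy

lemma eq_zero_of_isLittleO_inner (hφ : LipschitzWith L φ) (hx : x ∈ indSet φ) {m : E n}
    (hm : (fun y => ⟪φ y, m⟫ - ⟪φ x, m⟫) =o[𝓝 x] fun y => dist y x) : m = 0 := by
  by_contra hm0
  refine (hx (‖m‖⁻¹ • m) (norm_smul_inv_norm hm0)).not_ge
    ((lipAt_le_zero_iff (lipschitzWith_inner hφ _)).2 ?_)
  refine (hm.const_mul_left ‖m‖⁻¹).congr_left fun y => ?_
  simp only [inner_smul_right, mul_sub]

lemma diffWrtAt_of_isLittleO (hφ : LipschitzWith L φ) (hx : x ∈ indSet φ) {T : E n →ₗ[ℝ] ℝ}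
    (hT : (fun y => f y - f x - T (φ y - φ x)) =o[𝓝 x] fun y => dist y x) :
    DiffWrtAt φ f x := by
  refine ⟨T, (tendsto_abs_div_dist_iff (by simp)).2 hT, fun T' hT' => ?_⟩
  set m : E n := (InnerProductSpace.toDual ℝ (E n)).symm (T - T').toContinuousLinearMap with hm
  have hinner : ∀ v, ⟪v, m⟫ = T v - T' v := fun v => by
    rw [real_inner_comm, hm, InnerProductSpace.toDual_symm_apply]
    rfl
  have hm0 : m = 0 := by
    refine eq_zero_of_isLittleO_inner hφ hx
      ((((tendsto_abs_div_dist_iff (by simp)).1 hT').sub hT).congr_left fun y => ?_)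
    simp only [hinner, map_sub]
    ring
  ext1 v
  rw [eq_comm, ← sub_eq_zero, ← hinner, hm0, inner_zero_right]

/-- The map `(f, φ)` into `ℝⁿ⁺¹`, with first coordinate `f` and remaining coordinates `φ`. It is
used to compare `f` with the coordinates of a chart. -/
def consMap {α : Type*} {n : ℕ} (f : α → ℝ) (φ : α → E n) : α → E (n + 1) :=
  fun y => WithLp.toLp 2 (Fin.cons (f y) (φ y))

lemma inner_consMap {α : Type*} (f : α → ℝ) (φ : α → E n) (D : E (n + 1)) (y : α) :
    ⟪consMap f φ y, D⟫ = D 0 * f y + ⟪φ y, WithLp.toLp 2 (Fin.tail D)⟫ := by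
  simp [consMap, PiLp.inner_apply, Fin.sum_univ_succ, Fin.tail]

lemma exists_lipschitzWith_consMap (hf : LipschitzWith K f) (hφ : LipschitzWith L φ) :
    ∃ M, LipschitzWith M (consMap f φ) := by
  have hcons : LipschitzWith (max K L) fun y => (Fin.cons (f y) (φ y) : Fin (n + 1) → ℝ) :=
    LipschitzWith.of_dist_le_mul fun y z => (dist_pi_le_iff (by positivity)).2 <|
      Fin.cases (hf.weaken (le_max_left K L) |>.dist_le_mul y z) fun i =>
        (PiLp.dist_apply_le (φ y) (φ z) i).trans
          ((hφ.weaken (le_max_right K L)).dist_le_mul y z)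
  exact ⟨_, (PiLp.lipschitzWith_toLp 2 _).comp hcons⟩

lemma diffWrtAt_of_notMem_indSet_consMap (hf : LipschitzWith K f) (hφ : LipschitzWith L φ)
    (hx : x ∈ indSet φ) (hx' : x ∉ indSet (consMap f φ)) : DiffWrtAt φ f x := by
  obtain ⟨M, hM⟩ := exists_lipschitzWith_consMap hf hφ
  simp only [indSet, mem_ofPred_eq, not_forall, not_lt] at hx'
  obtain ⟨D, hD, hlip⟩ := hx'
  rw [lipAt_le_zero_iff (lipschitzWith_inner hM D)] at hlip
  simp only [inner_consMap] at hlip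
  set D' : E n := WithLp.toLp 2 (Fin.tail D)
  have hD0 : D 0 ≠ 0 := by
    intro hD0
    have hD'0 : D' = 0 := eq_zero_of_isLittleO_inner hφ hx (by simpa [hD0] using hlip)
    have hzero : D = 0 := by
      ext i
      exact Fin.cases hD0 (fun i => congrArg (fun v : E n => v i) hD'0) i
    simp [hzero] at hD
  refine diffWrtAt_of_isLittleO hφ hx (T := (-(D 0)⁻¹) • (innerSL ℝ D').toLinearMap)
    ((hlip.const_mul_left (D 0)⁻¹).congr_left fun y => ?_)
  simp only [LinearMap.smul_apply, ContinuousLinearMap.coe_coe, innerSL_apply_apply, smul_eq_mul,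
    inner_sub_right, real_inner_comm D']
  field_simp
  ring

end Differentiability

/-! ### Charts -/

lemma exists_seq_measure_diff_eq_zero {α ι : Type*} [MeasurableSpace α] (μ : Measure α)
    [SFinite μ] [Nonempty ι] {S : ι → Set α} (hS : ∀ i, MeasurableSet (S i)) :
    ∃ e : ℕ → ι, ∀ i, μ (S i \ ⋃ k, S (e k)) = 0 := by
  obtain ⟨ν, hν, hμν, -⟩ := exists_isFiniteMeasure_absolutelyContinuous μ
  let V : Set ℝ≥0∞ := range fun e : ℕ → ι => ν (⋃ k, S (e k))
  obtain ⟨u, -, hu, huV⟩ :=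
    exists_seq_tendsto_sSup (S := V) (range_nonempty _) (OrderTop.bddAbove V)
  choose F hF using huV
  let e : ℕ → ι := fun p => F p.unpair.1 p.unpair.2
  have hmax : sSup V ≤ ν (⋃ k, S (e k)) := by
    refine le_of_tendsto' hu fun m => ?_
    rw [← hF m]
    exact measure_mono (iUnion_subset fun k =>
      subset_iUnion_of_subset (Nat.pair m k) (by simp [e]))
  refine ⟨e, fun i => hμν ?_⟩
  have hcons : (⋃ k, S (Nat.casesOn k i e : ι)) = S i ∪ ⋃ k, S (e k) := by
    rw [← union_iUnion_nat_succ]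
    rfl
  have hle : ν (S i ∪ ⋃ k, S (e k)) ≤ ν (⋃ k, S (e k)) := by
    rw [← hcons]
    exact (le_sSup (mem_range_self fun k => Nat.casesOn k i e)).trans hmax
  rw [← union_sdiff_right,
    measure_sdiff subset_union_right (MeasurableSet.iUnion fun k => hS _).nullMeasurableSet
      (measure_ne_top ν _)]
  exact tsub_eq_zero_of_le hle

section Charts

variable {Y : Type*} [MetricSpace Y] [MeasurableSpace Y] {μ : Measure Y} {P : ℕ → Prop}

/- The null set missed by the charts may be added to each of them. -/
lemma isLipDiffSpaceWith_of_countable {ι : Type*} [Countable ι] [Nonempty ι] {N : ι → ℕ}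
    {U : ι → Set Y} {φ : (i : ι) → Y → E (N i)} (hN : ∀ i, P (N i))
    (hU : ∀ i, MeasurableSet (U i)) (hcover : ∀ᵐ x ∂μ, x ∈ ⋃ i, U i)
    (hφ : ∀ i, ∃ K, LipschitzWith K (φ i))
    (hdiff : ∀ f : Y → ℝ, (∃ K, LipschitzWith K f) →
      ∀ i, ∀ᵐ x ∂μ, x ∈ U i → DiffWrtAt (φ i) f x) :
    IsLipDiffSpaceWith μ P := by
  obtain ⟨e, he⟩ := exists_surjective_nat ι
  refine ⟨N ∘ e, fun k => U (e k) ∪ (⋃ i, U i)ᶜ, fun k => φ (e k), fun k => hN _,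
    fun k => (hU _).union (MeasurableSet.iUnion hU).compl, ?_, fun k => hφ _, fun f hf k => ?_⟩
  · rw [← iUnion_union, he.iUnion_comp, union_compl_self]
  · filter_upwards [hcover, hdiff f hf (e k)] with x hxU hx hmem
    exact hx (hmem.resolve_right (not_not_intro hxU))

variable [BorelSpace Y]

lemma exists_indSet_charts (μ : Measure Y) [SFinite μ] (n : ℕ) :
    ∃ Φ : ℕ → Y → E n, (∀ k, ∃ K, LipschitzWith K (Φ k)) ∧
      ∀ φ : Y → E n, (∃ K, LipschitzWith K φ) → μ (indSet φ \ ⋃ k, indSet (Φ k)) = 0 := by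
  have : Nonempty {φ : Y → E n // ∃ K, LipschitzWith K φ} := ⟨⟨fun _ => 0, 0, .const _⟩⟩
  obtain ⟨e, he⟩ := exists_seq_measure_diff_eq_zero μ
    (S := fun φ : {φ : Y → E n // ∃ K, LipschitzWith K φ} => indSet φ.1)
    fun φ => measurableSet_indSet φ.2.choose_spec
  exact ⟨fun k => (e k).1, fun k => (e k).2, fun φ hφ => he ⟨φ, hφ⟩⟩

/- Almost every point lies in a chart of maximal dimension `n`, and there `(f, φ)` cannot be
independent. -/
lemma isLipDiffSpaceWith_of_measure_indSet [SFinite μ] (hP0 : P 0) (hP : ∃ n, ¬ P n)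
    (h : ∀ n, ¬ P n → ∀ (φ : Y → E n) (L : ℝ≥0), LipschitzWith L φ → μ (indSet φ) = 0) :
    IsLipDiffSpaceWith μ P := by
  choose Φ hΦ hmax using exists_indSet_charts (Y := Y) μ
  let W : ℕ → Set Y := fun n => ⋃ k, indSet (Φ n k)
  have hmeas : ∀ n k, MeasurableSet (indSet (Φ n k)) := fun n k =>
    measurableSet_indSet (hΦ n k).choose_spec
  have hWnull : ∀ᵐ x ∂μ, ∀ n, ¬ P n → x ∉ W n :=
    ae_all_iff.2 fun n => eventually_imp_distrib_left.2 fun hn => measure_eq_zero_iff_ae_notMem.1 <|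
      measure_iUnion_null fun k => (hΦ n k).elim (h n hn _)
  have : Nonempty ({n // P n} × ℕ) := ⟨⟨⟨0, hP0⟩, 0⟩⟩
  refine isLipDiffSpaceWith_of_countable (ι := {n // P n} × ℕ) (N := fun i => i.1)
    (U := fun i => indSet (Φ i.1 i.2) \ W (i.1 + 1)) (φ := fun i => Φ i.1 i.2)
    (fun i => i.1.2) (fun i => (hmeas _ _).diff (.iUnion (hmeas _))) ?_ (fun i => hΦ _ _) ?_
  · filter_upwards [hWnull] with x hx
    obtain ⟨n, hxn, hxn'⟩ : ∃ n, x ∈ W n ∧ x ∉ W (n + 1) := by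
      by_contra! hsucc
      have hW0 : x ∈ W 0 := mem_iUnion.2 ⟨0, by simp [indSet_eq_univ_of_dim_zero]⟩
      obtain ⟨n, hn⟩ := hP
      exact hx n hn (Nat.rec hW0 hsucc n)
    obtain ⟨k, hk⟩ := mem_iUnion.1 hxn
    exact mem_iUnion.2 ⟨⟨⟨n, not_not.1 fun hn => hx n hn hxn⟩, k⟩, hk, hxn'⟩
  · rintro f ⟨K, hf⟩ ⟨n, k⟩
    obtain ⟨L, hφ⟩ := hΦ n k
    filter_upwards [measure_eq_zero_iff_ae_notMem.1
      (hmax (n + 1) _ (exists_lipschitzWith_consMap hf hφ))] with x hx hxU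
    exact diffWrtAt_of_notMem_indSet_consMap hf hφ hxU.1 fun hmem => hx ⟨hmem, hxU.2⟩

theorem cheeger_via_upper_gradients_general [SFinite μ] (hdim : dimH (univ : Set Y) < ⊤)
    {C : Y → ℝ} (h : LipLeUpperGradients μ C) :
    IsLipDiffSpaceWith μ fun k => (k : ℝ≥0∞) ≤ dimH (univ : Set Y) := by
  obtain ⟨n, hn⟩ := ENNReal.exists_nat_gt hdim.ne
  exact isLipDiffSpaceWith_of_measure_indSet (by simp) ⟨n, not_le.2 hn⟩
    fun m hm φ L hφ => h.measure_indSet_eq_zero (not_le.1 hm) hφ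

end Charts

/-- If `dim_H X < ∞` and there is `C ≥ 1` such that `Lip(f,·) ≤ C ρ`
`μ`-a.e. for every Lipschitz `f : X → ℝ` and every Borel upper gradient `ρ` of `f`, then
`(X,d,μ)` is a Lipschitz differentiability space with chart dimensions at most `dim_H X`. -/
theorem cheeger_via_upper_gradients (μ : Measure X) [SigmaFinite μ]
    (hdim : dimH (Set.univ : Set X) < ⊤) (C : ℝ) (hC : 1 ≤ C)
    (h : ∀ f : X → ℝ, (∃ K, LipschitzWith K f) → ∀ ρ : X → ℝ, Measurable ρ →
      IsUpperGradient f ρ → ∀ᵐ x ∂μ, lipAt f x ≤ C * ρ x) :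
    IsLipDiffSpaceWith μ (fun k => (k : ℝ≥0∞) ≤ dimH (Set.univ : Set X)) :=
  cheeger_via_upper_gradients_general hdim h

end BKO
end
end

section
/- Let X be a metric space and K ⊂ Γ(X) a compact set of curve fragments. Then the set 𝒩(K) = {m ∈ 𝓜(X) : there exists ℙ ∈ 𝓟(K) with m ≤ ν(ℙ)} is convex and compact with respect to weak* convergence of measures. -/
open MeasureTheory Metric Set Filter Topology ENNReal NNReal
open scoped RealInnerProductSpace

noncomputable section

namespace BKO

variable {X : Type*} [MetricSpace X]

variable {X : Type*} [MetricSpace X] [MeasurableSpace X] [BorelSpace X]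

/-!
The relation `m ≤ ν(ℙ)` is closed in the pair `(m, ℙ)`. Indeed, it says that `∫ f dm ≤ ν(ℙ)(spt f)`
for all continuous `0 ≤ f ≤ 1`; the left side is weak* continuous in `m`, and the right side is
upper semicontinuous in `ℙ`: for closed `F`, `ν(ℙ)(F)` is the `ℙ × 𝓛¹` measure of the closed set
`{(γ, t) | t ∈ dom γ, γ t ∈ F}`. Measures `m` as in `𝒩(K)` live on the compact union of the images
of the fragments in `K`, so by Prokhorov's theorem `𝒩(K)` is the projection of a closed subset of a
compact product.
-/

section MeasureTheory

variable {Ω : Type*} [MeasurableSpace Ω]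

theorem le_iff_forall_lintegral_le_measure_tsupport [PseudoEMetricSpace Ω] [BorelSpace Ω]
    {μ ν : Measure Ω} [IsFiniteMeasure μ] [IsFiniteMeasure ν] :
    μ ≤ ν ↔ ∀ f : BoundedContinuousFunction Ω ℝ≥0, (∀ x, f x ≤ 1) →
      ∫⁻ x, f x ∂μ ≤ ν (tsupport f) := by
  refine ⟨fun h f hf => ?_, fun h => ?_⟩
  · calc ∫⁻ x, f x ∂μ ≤ ∫⁻ x, f x ∂ν := lintegral_mono' h le_rfl
      _ ≤ ∫⁻ x, (tsupport f).indicator 1 x ∂ν := by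
        refine lintegral_mono fun x => ?_
        by_cases hx : x ∈ tsupport f
        · simpa [hx] using hf x
        · simp [image_eq_zero_of_notMem_tsupport hx]
      _ = ν (tsupport f) := lintegral_indicator_one (isClosed_tsupport f).measurableSet
  · have closed_le (F : Set Ω) (hF : IsClosed F) : μ F ≤ ν F := by
      have lim : Tendsto (fun δ => ν (cthickening δ F)) (𝓝[>] 0) (𝓝 (ν F)) :=
        (tendsto_measure_cthickening_of_isClosed ⟨1, one_pos, measure_ne_top _ _⟩ hF).mono_left
          nhdsWithin_le_nhds
      refine ge_of_tendsto lim (eventually_mem_nhdsWithin.mono fun δ hδ => ?_)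
      have support_subset : Function.support (thickenedIndicator hδ F) ⊆ thickening δ F :=
        Function.support_subset_iff'.2 fun x hx => thickenedIndicator_zero hδ F hx
      calc μ F ≤ ∫⁻ x, thickenedIndicator hδ F x ∂μ :=
            measure_le_lintegral_thickenedIndicator μ hF.measurableSet hδ
        _ ≤ ν (tsupport (thickenedIndicator hδ F)) := h _ (thickenedIndicator_le_one hδ F)
        _ ≤ ν (cthickening δ F) := measure_mono
          ((closure_mono support_subset).trans (closure_thickening_subset_cthickening δ F))
    refine Measure.le_iff.2 fun s hs => ?_
    rw [hs.measure_eq_iSup_isClosed_of_ne_top (measure_ne_top _ _)]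
    exact iSup₂_le fun F hFs => iSup_le fun hF => (closed_le F hF).trans (measure_mono hFs)

theorem isClosed_setOf_toMeasure_le [PseudoEMetricSpace Ω] [BorelSpace Ω]
    {α : Type*} [TopologicalSpace α] {κ : α → Measure Ω} [∀ a, IsFiniteMeasure (κ a)]
    (hκ : ∀ F, IsClosed F → UpperSemicontinuous fun a => κ a F) :
    IsClosed {p : FiniteMeasure Ω × α | (p.1 : Measure Ω) ≤ κ p.2} := by
  simp only [le_iff_forall_lintegral_le_measure_tsupport, ofPred_forall]
  refine isClosed_iInter fun f => isClosed_iInter fun _ => ?_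
  have hypograph_closed := upperSemicontinuous_iff_IsClosed_hypograph.1
    (hκ (tsupport f) (isClosed_tsupport f))
  have lintegral_cont : Continuous fun m : FiniteMeasure Ω => ∫⁻ x, f x ∂(m : Measure Ω) := by
    simp only [← FiniteMeasure.testAgainstNN_coe_eq]
    exact ENNReal.continuous_coe.comp (FiniteMeasure.continuous_testAgainstNN_eval f)
  exact hypograph_closed.preimage
    (continuous_snd.prodMk (lintegral_cont.comp continuous_fst))

theorem isCompact_setOf_exists_toMeasure_le [EMetricSpace Ω] [BorelSpace Ω]
    {α : Type*} [TopologicalSpace α] {κ : α → Measure Ω} [∀ a, IsFiniteMeasure (κ a)]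
    (hκ : ∀ F, IsClosed F → UpperSemicontinuous fun a => κ a F)
    {S : Set α} (hS : IsCompact S) {L : Set Ω} (hL : IsCompact L) (hκL : ∀ a ∈ S, κ a Lᶜ = 0)
    (C : ℝ≥0) :
    IsCompact {m : FiniteMeasure Ω | (m : Measure Ω) univ ≤ C ∧
      ∃ a ∈ S, (m : Measure Ω) ≤ κ a} := by
  have compact_prod := (isCompact_setOfPred_finiteMeasure_le_of_isCompact C hL).prod hS
  convert (compact_prod.inter_right (isClosed_setOf_toMeasure_le hκ)).image continuous_fst
  ext m
  have mass_iff : (m : Measure Ω) univ ≤ C ↔ m.mass ≤ C := by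
    rw [← FiniteMeasure.ennreal_mass, ENNReal.coe_le_coe]
  constructor
  · rintro ⟨hm, a, ha, hma⟩
    have compl_null : m Lᶜ = 0 :=
      (FiniteMeasure.null_iff_toMeasure_null m _).2 (le_zero_iff.1 ((hma _).trans_eq (hκL a ha)))
    exact ⟨(m, a), ⟨⟨⟨mass_iff.1 hm, compl_null⟩, ha⟩, hma⟩, rfl⟩
  · rintro ⟨⟨m, a⟩, ⟨⟨⟨hm, -⟩, ha⟩, hma⟩, rfl⟩
    exact ⟨mass_iff.2 hm, a, ha, hma⟩

theorem isCompact_setOf_probabilityMeasure_compl_eq_zero [TopologicalSpace Ω] [T2Space Ω]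
    [BorelSpace Ω] {K : Set Ω} (hK : IsCompact K) :
    IsCompact {P : ProbabilityMeasure Ω | (P : Measure Ω) Kᶜ = 0} := by
  simpa using isCompact_setOfPred_probabilityMeasure_mass_eq_compl_isCompact_le
    (u := fun _ => 0) tendsto_const_nhds (fun _ => hK) (.inr monotone_const)

theorem upperSemicontinuous_probabilityMeasure_apply [TopologicalSpace Ω] [OpensMeasurableSpace Ω]
    [HasOuterApproxClosed Ω] {F : Set Ω} (hF : IsClosed F) :
    UpperSemicontinuous fun P : ProbabilityMeasure Ω => (P : Measure Ω) F :=
  upperSemicontinuous_iff_limsup_le.2 fun _ =>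
    ProbabilityMeasure.limsup_measure_closed_le_of_tendsto tendsto_id hF

/-- `ProbabilityMeasure.continuous_prod` is available only for second countable factors, and `Γ(X)`
is not second countable in general. -/
theorem continuous_probabilityMeasure_prod_const [TopologicalSpace Ω] [FirstCountableTopology Ω]
    [OpensMeasurableSpace Ω] {T : Type*} [TopologicalSpace T] [MeasurableSpace T]
    [OpensMeasurableSpace T] [OpensMeasurableSpace (Ω × T)] (Q : ProbabilityMeasure T) :
    Continuous fun P : ProbabilityMeasure Ω => P.prod Q := by
  refine ProbabilityMeasure.continuous_iff_forall_continuous_integral.2 fun f => ?_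
  have norm_le (x : Ω) (t : T) : ‖f (x, t)‖ ≤ ‖f‖ := f.norm_coe_le_norm _
  have inner_continuous : Continuous fun x => ∫ t, f (x, t) ∂(Q : Measure T) :=
    continuous_of_dominated (bound := fun _ => ‖f‖)
      (fun x => (f.continuous.comp (.prodMk_right x)).aestronglyMeasurable)
      (fun x => .of_forall (norm_le x)) (integrable_const _)
      (.of_forall fun t => f.continuous.comp (.prodMk_left t))
  let inner : BoundedContinuousFunction Ω ℝ :=
    .ofNormedAddCommGroup _ inner_continuous ‖f‖ fun x =>
      (norm_integral_le_of_norm_le_const (.of_forall (norm_le x))).trans_eq (by simp)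
  convert! ProbabilityMeasure.continuous_integral_boundedContinuousFunction inner using 2 with P
  exact integral_prod _ (f.integrable _)

end MeasureTheory

namespace Fragment

/-- The domain `{(γ, t) | t ∈ dom γ}` of the evaluation map `(γ, t) ↦ γ t`; the map itself is
`Function.uncurry Fragment.fn`. -/
def evalDomain (X : Type*) [MetricSpace X] : Set (Fragment X × ℝ) := {p | p.2 ∈ p.1.dom}

section Evaluation

omit [MeasurableSpace X] [BorelSpace X]

theorem isCompact_dom (γ : Fragment X) : IsCompact γ.dom := γ.1.isCompact.image continuous_fst

theorem dom_subset_Icc (γ : Fragment X) : γ.dom ⊆ Icc 0 1 := by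
  rintro _ ⟨p, hp, rfl⟩
  exact γ.2.1 p hp

theorem mk_fn_mem_graph (γ : Fragment X) {t : ℝ} (ht : t ∈ γ.dom) : (t, γ.fn t) ∈ γ.graph := by
  obtain ⟨⟨s, x⟩, hp, rfl⟩ := ht
  have h : ∃ x, (s, x) ∈ γ.graph := ⟨x, hp⟩
  rw [fn, dif_pos h]
  exact h.choose_spec

theorem fn_mem_im (γ : Fragment X) {t : ℝ} (ht : t ∈ γ.dom) : γ.fn t ∈ γ.im :=
  ⟨_, γ.mk_fn_mem_graph ht, rfl⟩

theorem exists_mem_graph_dist_lt {γ γ' : Fragment X} {r : ℝ} (h : dist γ γ' < r) {p : ℝ × X}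
    (hp : p ∈ γ.graph) : ∃ q ∈ γ'.graph, dist p q < r :=
  exists_dist_lt_of_hausdorffDist_lt hp h (hausdorffEDist_ne_top_of_nonempty_of_bounded
    γ.1.nonempty γ'.1.nonempty γ.1.isCompact.isBounded γ'.1.isCompact.isBounded)

theorem dist_fn_le {γ γ' : Fragment X} {t t' : ℝ} (ht : t ∈ γ.dom) (ht' : t' ∈ γ'.dom) :
    dist (γ.fn t) (γ'.fn t') ≤ 3 * dist γ γ' + 2 * dist t t' := by
  refine le_of_forall_pos_le_add fun ε hε => ?_
  obtain ⟨⟨s, y⟩, hsy, hlt⟩ := exists_mem_graph_dist_lt (γ' := γ')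
    (lt_add_of_pos_right (dist γ γ') (show 0 < ε / 3 by positivity)) (γ.mk_fn_mem_graph ht)
  obtain ⟨hs, hy⟩ : dist t s < _ ∧ dist (γ.fn t) y < _ := max_lt_iff.1 hlt
  have lipschitz : dist y (γ'.fn t') ≤ 2 * dist s t' :=
    (γ'.2.2 _ hsy _ (γ'.mk_fn_mem_graph ht')).2
  calc dist (γ.fn t) (γ'.fn t') ≤ dist (γ.fn t) y + 2 * (dist t s + dist t t') := by
        linarith [dist_triangle (γ.fn t) y (γ'.fn t'), dist_triangle_left s t' t]
    _ ≤ 3 * dist γ γ' + 2 * dist t t' + ε := by linarith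

theorem isClosed_evalDomain : IsClosed (evalDomain X) := by
  refine isClosed_of_closure_subset fun ⟨γ, t⟩ hp => ?_
  refine γ.isCompact_dom.isClosed.closure_subset (Metric.mem_closure_iff.2 fun ε hε => ?_)
  obtain ⟨⟨γ', t'⟩, ht', hlt⟩ := Metric.mem_closure_iff.1 hp (ε / 2) (half_pos hε)
  obtain ⟨hγ, ht⟩ : dist γ γ' < ε / 2 ∧ dist t t' < ε / 2 := max_lt_iff.1 hlt
  obtain ⟨q, hq, hlt⟩ := exists_mem_graph_dist_lt (dist_comm γ γ' ▸ hγ) (γ'.mk_fn_mem_graph ht')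
  have hq' : dist t' q.1 < ε / 2 := (max_lt_iff.1 hlt).1
  exact ⟨q.1, mem_image_of_mem _ hq, by linarith [dist_triangle t t' q.1]⟩

theorem continuousOn_uncurry_fn : ContinuousOn (Function.uncurry fn) (evalDomain X) := by
  refine LipschitzOnWith.continuousOn (K := 5) (.of_dist_le_mul fun p hp q hq => ?_)
  calc dist (p.1.fn p.2) (q.1.fn q.2) ≤ 3 * dist p.1 q.1 + 2 * dist p.2 q.2 := dist_fn_le hp hq
    _ ≤ 3 * dist p q + 2 * dist p q := by gcongr; exacts [le_max_left _ _, le_max_right _ _]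
    _ = (5 : ℝ≥0) * dist p q := by push_cast; ring

theorem continuousOn_fn (γ : Fragment X) : ContinuousOn γ.fn γ.dom :=
  continuousOn_uncurry_fn.comp (f := fun t => (γ, t)) (by fun_prop) fun _ ht => ht

theorem isClosed_evalDomain_inter_preimage {F : Set X} (hF : IsClosed F) :
    IsClosed (evalDomain X ∩ Function.uncurry fn ⁻¹' F) :=
  continuousOn_uncurry_fn.preimage_isClosed_of_isClosed isClosed_evalDomain hF

theorem isCompact_biUnion_im {K : Set (Fragment X)} (hK : IsCompact K) :
    IsCompact (⋃ γ ∈ K, γ.im) := by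
  have graphs := TopologicalSpace.NonemptyCompacts.isCompact_biUnion_coe_of_isCompact
    (hK.image continuous_subtype_val)
  have im_eq : ⋃ γ ∈ K, γ.im = Prod.snd '' ⋃ G ∈ Subtype.val '' K, (G : Set (ℝ × X)) := by
    rw [image_iUnion₂]
    exact (biUnion_image (f := Subtype.val) (s := K)
      (g := fun G => Prod.snd '' (G : Set (ℝ × X)))).symm
  exact im_eq ▸ graphs.image continuous_snd

end Evaluation

theorem measurableSet_evalDomain_inter_preimage {B : Set X} (hB : MeasurableSet B) :
    MeasurableSet (evalDomain X ∩ Function.uncurry fn ⁻¹' B) := by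
  have h := isClosed_evalDomain.measurableSet.subtype_image
    ((continuousOn_iff_continuous_domRestrict.1
      (continuousOn_uncurry_fn (X := X))).measurable hB)
  rwa [domRestrict_eq, preimage_comp, Subtype.image_preimage_coe] at h

theorem measure_apply (γ : Fragment X) {B : Set X} (hB : MeasurableSet B) :
    γ.measure B = volume (γ.dom ∩ γ.fn ⁻¹' B) := by
  have hdom := γ.isCompact_dom.measurableSet
  rw [measure, Measure.map_apply_of_aemeasurable (γ.continuousOn_fn.aemeasurable hdom) hB,
    Measure.restrict_apply' hdom, inter_comm]

theorem measure_compl_eq_zero (γ : Fragment X) {L : Set X} (hL : MeasurableSet L)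
    (h : γ.im ⊆ L) : γ.measure Lᶜ = 0 := by
  have hempty : γ.dom ∩ γ.fn ⁻¹' Lᶜ = ∅ :=
    disjoint_iff_inter_eq_empty.1 (disjoint_left.2 fun _ ht hnt => hnt (h (γ.fn_mem_im ht)))
  rw [γ.measure_apply hL.compl, hempty, measure_empty]

theorem measurable_measure : Measurable (measure : Fragment X → Measure X) := by
  refine Measure.measurable_of_measurable_coe _ fun B hB => ?_
  simp only [measure_apply _ hB]
  exact measurable_measure_prodMk_left (measurableSet_evalDomain_inter_preimage hB)

end Fragment

theorem nu_apply (P : Measure (Fragment X)) [SFinite P] {B : Set X} (hB : MeasurableSet B) :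
    nu P B = P.prod (volume.restrict (Icc 0 1))
      (Fragment.evalDomain X ∩ Function.uncurry Fragment.fn ⁻¹' B) := by
  rw [nu, Measure.bind_apply hB Fragment.measurable_measure.aemeasurable,
    Measure.prod_apply (Fragment.measurableSet_evalDomain_inter_preimage hB)]
  refine lintegral_congr fun γ => ?_
  rw [γ.measure_apply hB]
  exact (Measure.restrict_eq_self _ (inter_subset_left.trans γ.dom_subset_Icc)).symm

theorem nu_add_smul (a b : ℝ≥0) (P Q : Measure (Fragment X)) :
    nu (a • P + b • Q) = a • nu P + b • nu Q := by
  ext B hB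
  simp only [nu, Measure.add_apply, Measure.smul_apply,
    Measure.bind_apply hB Fragment.measurable_measure.aemeasurable, lintegral_add_measure,
    lintegral_smul_measure]

theorem nu_compl_eq_zero {P : Measure (Fragment X)} {K : Set (Fragment X)} (hP : P Kᶜ = 0)
    {L : Set X} (hL : MeasurableSet L) (h : ∀ γ ∈ K, γ.im ⊆ L) : nu P Lᶜ = 0 := by
  have null_on_K : ∀ᵐ γ ∂P, γ.measure Lᶜ = 0 :=
    Eventually.mono (mem_ae_iff.2 hP) fun γ hγ => γ.measure_compl_eq_zero hL (h γ hγ)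
  rw [nu, Measure.bind_apply hL.compl Fragment.measurable_measure.aemeasurable,
    lintegral_congr_ae null_on_K, lintegral_zero]

instance (P : Measure (Fragment X)) [IsFiniteMeasure P] : IsFiniteMeasure (nu P) :=
  ⟨by rw [nu_apply P .univ]; exact measure_lt_top _ _⟩

theorem upperSemicontinuous_nu_apply {F : Set X} (hF : IsClosed F) :
    UpperSemicontinuous fun P : ProbabilityMeasure (Fragment X) => nu P F := by
  let time : ProbabilityMeasure ℝ := ⟨volume.restrict (Icc 0 1), ⟨by simp⟩⟩
  simp only [nu_apply _ hF.measurableSet]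
  exact (upperSemicontinuous_probabilityMeasure_apply
    (Fragment.isClosed_evalDomain_inter_preimage hF)).comp
      (continuous_probabilityMeasure_prod_const time)

/-- The set `𝒩(K)` of measures of mass at most `1` dominated by `ν(ℙ)` for some probability
measure `ℙ` on `K`. The condition that `ℙ` lives on `K` is encoded as `ℙ Kᶜ = 0`. -/
def nuDominated (K : Set (Fragment X)) : Set (FiniteMeasure X) :=
  {m | (m : Measure X) univ ≤ 1 ∧ ∃ ℙ : Measure (Fragment X),
    IsProbabilityMeasure ℙ ∧ ℙ Kᶜ = 0 ∧ (m : Measure X) ≤ nu ℙ}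

theorem convex_nuDominated (K : Set (Fragment X)) : Convex ℝ≥0 (nuDominated K) := by
  rintro m ⟨hm, P, _, hP, hmP⟩ m' ⟨hm', P', _, hP', hmP'⟩ a b _ _ hab
  have hab' : (a : ℝ≥0∞) + b = 1 := mod_cast hab
  refine ⟨?_, a • P + b • P', ⟨?_⟩, ?_, ?_⟩
  · calc ((a • m + b • m' : FiniteMeasure X) : Measure X) univ
        = a * (m : Measure X) univ + b * (m' : Measure X) univ := rfl
      _ ≤ a * 1 + b * 1 := by gcongr
      _ = 1 := by rw [mul_one, mul_one, hab']
  · calc (a • P + b • P') univ = a * P univ + b * P' univ := rfl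
      _ = 1 := by rw [measure_univ, measure_univ, mul_one, mul_one, hab']
  · simp [hP, hP']
  · calc ((a • m + b • m' : FiniteMeasure X) : Measure X)
        = a • (m : Measure X) + b • (m' : Measure X) := rfl
      _ ≤ a • nu P + b • nu P' := by gcongr
      _ = nu (a • P + b • P') := (nu_add_smul a b P P').symm

theorem isCompact_nuDominated {K : Set (Fragment X)} (hK : IsCompact K) :
    IsCompact (nuDominated K) := by
  have compact_images := Fragment.isCompact_biUnion_im hK
  have nuDominated_eq : nuDominated K = {m : FiniteMeasure X |
      (m : Measure X) univ ≤ (1 : ℝ≥0) ∧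
        ∃ P ∈ {P : ProbabilityMeasure (Fragment X) | (P : Measure (Fragment X)) Kᶜ = 0},
          (m : Measure X) ≤ nu P} := by
    ext m
    constructor
    · rintro ⟨hm, P, hprob, hP, hmP⟩
      exact ⟨by simpa using hm, ⟨P, hprob⟩, hP, hmP⟩
    · rintro ⟨hm, P, hP, hmP⟩
      exact ⟨by simpa using hm, P, inferInstance, hP, hmP⟩
  rw [nuDominated_eq]
  refine isCompact_setOf_exists_toMeasure_le (fun _ => upperSemicontinuous_nu_apply)
    (isCompact_setOf_probabilityMeasure_compl_eq_zero hK) compact_images (fun P hP => ?_) 1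
  exact nu_compl_eq_zero hP compact_images.measurableSet fun _ hγ =>
    subset_biUnion_of_mem (u := Fragment.im) hγ

/-- For compact `K ⊆ Γ(X)`, the set
`𝒩(K) = {m ∈ 𝓜(X) : ∃ ℙ ∈ 𝓟(K), m ≤ ν(ℙ)}` of measures of total mass at most `1`
dominated by some `ν(ℙ)` with `ℙ` a probability measure concentrated on `K`
is convex and compact in the weak* topology. -/
theorem convex_isCompact_N (K : Set (Fragment X)) (hK : IsCompact K) :
    Convex ℝ≥0 {m : FiniteMeasure X | (m : Measure X) Set.univ ≤ 1 ∧
        ∃ ℙ : Measure (Fragment X), IsProbabilityMeasure ℙ ∧ ℙ Kᶜ = 0 ∧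
          (m : Measure X) ≤ nu ℙ} ∧
    IsCompact {m : FiniteMeasure X | (m : Measure X) Set.univ ≤ 1 ∧
        ∃ ℙ : Measure (Fragment X), IsProbabilityMeasure ℙ ∧ ℙ Kᶜ = 0 ∧
          (m : Measure X) ≤ nu ℙ} :=
  ⟨convex_nuDominated K, isCompact_nuDominated hK⟩

end BKO
end
end
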